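/- For every two convex bodies K and L in R^m (m ≥ 2), the volume of their Blaschke sum does not exceed the volume of their Minkowski sum: Vol(K # L) ≤ Vol(K + L). -/

import Mathlib

open MeasureTheory Set
open scoped ENNReal Pointwise RealInnerProductSpace Topology

noncomputable section

abbrev Euc (m : ℕ) : Type := EuclideanSpace ℝ (Fin m)

/-- A convex body: compact convex set with nonempty interior. -/
def IsConvexBody {m : ℕ} (K : Set (Euc m)) : Prop :=
  Convex ℝ K ∧ IsCompact K ∧ (interior K).Nonempty

/-- A (compact convex) polytope: convex hull of a finite set. -/
def IsPolytope {m : ℕ} (P : Set (Euc m)) : Prop :=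
  ∃ s : Finset (Euc m), P = convexHull ℝ (s : Set (Euc m))

def unitSphere (m : ℕ) : Set (Euc m) := Metric.sphere 0 1

/-- `n` is an outward unit normal to `K` at the boundary point `x`. -/
def IsOutwardNormalAt {m : ℕ} (K : Set (Euc m)) (x n : Euc m) : Prop :=
  x ∈ frontier K ∧ ‖n‖ = 1 ∧ ∀ y ∈ K, ⟪y - x, n⟫ ≤ 0

open Classical in
/-- The (set-valued choice of) Gauss map of `K`. -/
def gaussMap {m : ℕ} (K : Set (Euc m)) (x : Euc m) : Euc m :=
  if h : ∃ n, IsOutwardNormalAt K x n then h.choose else 0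

/-- The surface area measure of `K`: the pushforward under the Gauss map of the
`(m-1)`-dimensional Hausdorff measure on the boundary of `K`. -/
def surfMeasure {m : ℕ} (K : Set (Euc m)) : Measure (Euc m) :=
  Measure.map (gaussMap K) (μH[(m : ℝ) - 1].restrict (frontier K))

/-- The face of `P` in direction `n`. -/
def faceIn {m : ℕ} (P : Set (Euc m)) (n : Euc m) : Set (Euc m) :=
  {x ∈ P | ∀ y ∈ P, ⟪y, n⟫ ≤ ⟪x, n⟫}

/-- The `(m-1)`-dimensional volume of the face of `P` in direction `n`. -/
def faceArea {m : ℕ} (P : Set (Euc m)) (n : Euc m) : ℝ≥0∞ :=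
  μH[(m : ℝ) - 1] (faceIn P n)

/-- `n` is the outward unit normal to a facet ((m-1)-dimensional face) of `P`. -/
def IsFacetNormal {m : ℕ} (P : Set (Euc m)) (n : Euc m) : Prop :=
  ‖n‖ = 1 ∧ 0 < faceArea P n

theorem Real.volume_add_le_volume_add {A B : Set ℝ} (hA : IsCompact A) (hB : IsCompact B)
    (hA' : A.Nonempty) (hB' : B.Nonempty) : volume A + volume B ≤ volume (A + B) := by
  obtain ⟨a, ha, hamax⟩ := hA.exists_isGreatest hA'
  obtain ⟨b, hb, hbmin⟩ := hB.exists_isLeast hB'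
  have h1 : volume ((fun x => x + b) '' A) = volume A := by
    simp
  have h2 : volume ((fun x => a + x) '' B) = volume B := by
    simp
  have hm : MeasurableSet ((fun x => a + x) '' B) :=
    (hB.image (by fun_prop)).measurableSet
  have hmem : volume ((fun x => x + b) '' A ∩ (fun x => a + x) '' B) = 0 := by
    refine measure_mono_null (t := {a + b}) ?_ (by simp)
    rintro z ⟨⟨x, hx, rfl⟩, ⟨y, hy, hxy⟩⟩
    have := hamax hx
    have := hbmin hy
    simp only [mem_singleton_iff] at *
    linarith
  have := measure_union_add_inter (μ := volume) ((fun x => x + b) '' A) hm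
  rw [hmem, h1, h2, add_zero] at this
  rw [← this]
  apply measure_mono
  rintro z (⟨x, hx, rfl⟩ | ⟨y, hy, rfl⟩)
  · exact add_mem_add hx hb
  · exact add_mem_add ha hy

theorem Real.weighted_volume_le_of_combo_subset {A B C : Set ℝ} (hA : MeasurableSet A)
    (hB : MeasurableSet B) (hA' : A.Nonempty) (hB' : B.Nonempty) {τ : ℝ} (h0 : 0 < τ) (h1 : τ < 1)
    (hC : ∀ x ∈ A, ∀ y ∈ B, (1 - τ) * x + τ * y ∈ C) :
    ENNReal.ofReal (1 - τ) * volume A + ENNReal.ofReal τ * volume B ≤ volume C := by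
  have key : ∀ A' ⊆ A, IsCompact A' → ∀ B' ⊆ B, IsCompact B' → A'.Nonempty → B'.Nonempty →
      ENNReal.ofReal (1 - τ) * volume A' + ENNReal.ofReal τ * volume B' ≤ volume C := by
    intro A' hA'A cA B' hB'B cB nA nB
    have hs : volume ((1 - τ) • A' + τ • B') ≤ volume C := by
      apply measure_mono
      rintro z ⟨_, ⟨x, hx, rfl⟩, _, ⟨y, hy, rfl⟩, rfl⟩
      exact hC x (hA'A hx) y (hB'B hy)
    refine le_trans ?_ hs
    refine le_trans (le_of_eq ?_) (Real.volume_add_le_volume_add (cA.smul (1 - τ)) (cB.smul τ)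
      nA.smul_set nB.smul_set)
    simp [Measure.addHaar_smul, abs_of_pos h0, abs_of_pos (sub_pos.2 h1)]
  have step : ∀ (S : Set ℝ) (c x y : ℝ≥0∞), MeasurableSet S → S.Nonempty →
      (∀ K ⊆ S, IsCompact K → K.Nonempty → c * volume K + x ≤ y) → c * volume S + x ≤ y := by
    rintro S c x y hS ⟨a, ha⟩ h
    have hxy : x ≤ y := le_trans le_add_self
      (h {a} (singleton_subset_iff.2 ha) isCompact_singleton (singleton_nonempty a))
    rcases eq_or_ne x ∞ with rfl | hx
    · simpa using hxy
    refine add_le_of_le_tsub_right_of_le hxy ?_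
    rw [hS.measure_eq_iSup_isCompact]
    simp only [ENNReal.mul_iSup]
    refine iSup_le fun K => iSup_le fun hK => iSup_le fun hKc => ?_
    rcases K.eq_empty_or_nonempty with rfl | hne
    · simp
    exact ENNReal.le_sub_of_add_le_right hx (h K hK hKc hne)
  refine step A _ _ _ hA hA' fun K hK hKc hKn => ?_
  rw [add_comm]
  refine step B _ _ _ hB hB' fun K' hK' hKc' hKn' => ?_
  rw [add_comm]
  exact key K hK hKc K' hK' hKc' hKn hKn'

theorem ENNReal.rpow_mul_rpow_le_add (a b : ℝ≥0∞) {τ : ℝ} (h0 : 0 < τ) (h1 : τ < 1) :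
    a ^ (1 - τ) * b ^ τ ≤ ENNReal.ofReal (1 - τ) * a + ENNReal.ofReal τ * b := by
  have p1 : ENNReal.ofReal (1 - τ) ≠ 0 := by simpa using h1
  have p2 : ENNReal.ofReal τ ≠ 0 := by simpa using h0
  rcases eq_or_ne a ∞ with rfl | ha
  · simp [ENNReal.mul_top, p1]
  rcases eq_or_ne b ∞ with rfl | hb
  · simp [ENNReal.mul_top, p2]
  lift a to NNReal using ha
  lift b to NNReal using hb
  have := NNReal.geom_mean_le_arith_mean2_weighted (1 - τ).toNNReal τ.toNNReal a b
    (by rw [← Real.toNNReal_add (by linarith) h0.le]; simp)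
  rw [Real.coe_toNNReal _ (by linarith), Real.coe_toNNReal _ h0.le] at this
  rw [← ENNReal.coe_rpow_of_nonneg _ (by linarith), ← ENNReal.coe_rpow_of_nonneg _ h0.le]
  simp only [ENNReal.ofReal]
  exact_mod_cast this

theorem lintegral_eq_lintegral_volume_lt_toReal {α : Type*} [MeasurableSpace α] (μ : Measure α)
    {f : α → ℝ≥0∞} (hf : Measurable f) (hfin : ∀ x, f x ≠ ∞) :
    ∫⁻ x, f x ∂μ = ∫⁻ t in Ioi (0 : ℝ), μ {x | ENNReal.ofReal t < f x} := by
  have h := lintegral_eq_lintegral_meas_lt μ (f := fun x => (f x).toReal)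
    (Filter.Eventually.of_forall fun x => ENNReal.toReal_nonneg) hf.ennreal_toReal.aemeasurable
  simp only [ENNReal.ofReal_toReal (hfin _)] at h
  rw [h]
  refine setLIntegral_congr_fun measurableSet_Ioi fun t ht => ?_
  simp only [ENNReal.ofReal_lt_iff_lt_toReal (le_of_lt ht) (hfin _)]

theorem weighted_lintegral_le_of_iSup_eq_one {f g h : ℝ → ℝ≥0∞} (hf : Measurable f)
    (hg : Measurable g) (hh : Measurable h) {τ : ℝ} (h0 : 0 < τ) (h1 : τ < 1)
    (hfs : ⨆ x, f x = 1) (hgs : ⨆ x, g x = 1)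
    (H : ∀ x y, f x ^ (1 - τ) * g y ^ τ ≤ h ((1 - τ) * x + τ * y)) :
    ENNReal.ofReal (1 - τ) * (∫⁻ x, f x) + ENNReal.ofReal τ * (∫⁻ x, g x) ≤ ∫⁻ x, h x := by
  have hf1 : ∀ x, f x ≤ 1 := fun x => hfs ▸ le_iSup f x
  have hg1 : ∀ x, g x ≤ 1 := fun x => hgs ▸ le_iSup g x
  have hle : ∫⁻ x, min (h x) 1 ≤ ∫⁻ x, h x := lintegral_mono fun x => min_le_left _ _
  refine le_trans ?_ hle
  rw [lintegral_eq_lintegral_volume_lt_toReal _ hf fun x => ne_top_of_le_ne_top (by simp) (hf1 x),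
    lintegral_eq_lintegral_volume_lt_toReal _ hg fun x => ne_top_of_le_ne_top (by simp) (hg1 x),
    lintegral_eq_lintegral_volume_lt_toReal _ (hh.min measurable_const)
      fun x => ne_top_of_le_ne_top (by simp) (min_le_right _ _)]
  rw [← lintegral_const_mul' _ _ (by simp), ← lintegral_const_mul' _ _ (by simp)]
  have hmeas : Measurable fun t : ℝ => volume {x | ENNReal.ofReal t < g x} := by
    apply Antitone.measurable
    intro s t hst
    exact measure_mono fun x hx => lt_of_le_of_lt (ENNReal.ofReal_le_ofReal hst) hx
  rw [← lintegral_add_right _ (hmeas.const_mul _)]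
  refine setLIntegral_mono' measurableSet_Ioi fun t ht => ?_
  by_cases ht1 : 1 ≤ t
  · have e : ∀ k : ℝ → ℝ≥0∞, (∀ x, k x ≤ 1) → {x | ENNReal.ofReal t < k x} = ∅ := by
      intro k hk
      refine eq_empty_of_forall_notMem fun x hx => ?_
      exact absurd (lt_of_lt_of_le hx (hk x)) (by simpa using ht1)
    rw [e f hf1, e g hg1]
    simp
  push Not at ht1
  have ht1' : ENNReal.ofReal t < 1 := by simpa using ht1
  refine Real.weighted_volume_le_of_combo_subset (measurableSet_lt measurable_const hf)
    (measurableSet_lt measurable_const hg) ?_ ?_ h0 h1 ?_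
  · rw [← hfs] at ht1'
    exact lt_iSup_iff.1 ht1'
  · rw [← hgs] at ht1'
    exact lt_iSup_iff.1 ht1'
  · intro x hx y hy
    refine lt_min (lt_of_lt_of_le ?_ (H x y)) ht1'
    have hc : ENNReal.ofReal t = ENNReal.ofReal t ^ (1 - τ) * ENNReal.ofReal t ^ τ := by
      rw [← ENNReal.rpow_add _ _ (by simpa using ht) (by simp)]
      simp
    rw [hc]
    exact ENNReal.mul_lt_mul (ENNReal.rpow_lt_rpow hx (by linarith)) (ENNReal.rpow_lt_rpow hy h0)

theorem prekopa_leindler_real_of_bounded {f g h : ℝ → ℝ≥0∞} (hf : Measurable f)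
    (hg : Measurable g) (hh : Measurable h) {τ : ℝ} (h0 : 0 < τ) (h1 : τ < 1)
    (hfs : ⨆ x, f x ≠ ∞) (hgs : ⨆ x, g x ≠ ∞)
    (H : ∀ x y, f x ^ (1 - τ) * g y ^ τ ≤ h ((1 - τ) * x + τ * y)) :
    (∫⁻ x, f x) ^ (1 - τ) * (∫⁻ x, g x) ^ τ ≤ ∫⁻ x, h x := by
  set a := ⨆ x, f x with ha
  set b := ⨆ x, g x with hb
  have h1' : 0 < 1 - τ := sub_pos.2 h1
  rcases eq_or_ne a 0 with ha0 | ha0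
  · have : ∀ x, f x = 0 := fun x => le_antisymm (ha0 ▸ le_iSup f x) zero_le
    simp [this, h1']
  rcases eq_or_ne b 0 with hb0 | hb0
  · have : ∀ x, g x = 0 := fun x => le_antisymm (hb0 ▸ le_iSup g x) zero_le
    simp [this, h0]
  set c := a ^ (1 - τ) * b ^ τ with hc
  have hc0 : c ≠ 0 := by simp [hc, ha0, hb0, hfs, hgs]
  have hct : c ≠ ∞ := ENNReal.mul_ne_top (ENNReal.rpow_ne_top_of_nonneg h1'.le hfs)
    (ENNReal.rpow_ne_top_of_nonneg h0.le hgs)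
  have hcinv : (a⁻¹) ^ (1 - τ) * (b⁻¹) ^ τ = c⁻¹ := by
    rw [hc, ENNReal.mul_inv (by simp [ha0, hfs]) (by simp [hb0, hgs]), ENNReal.inv_rpow,
      ENNReal.inv_rpow]
  have key := weighted_lintegral_le_of_iSup_eq_one (hf.const_mul a⁻¹) (hg.const_mul b⁻¹)
    (hh.const_mul c⁻¹) h0 h1
    (by rw [← ENNReal.mul_iSup, ← ha, ENNReal.inv_mul_cancel ha0 hfs])
    (by rw [← ENNReal.mul_iSup, ← hb, ENNReal.inv_mul_cancel hb0 hgs])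
    (fun x y => by
      rw [ENNReal.mul_rpow_of_nonneg _ _ h1'.le, ENNReal.mul_rpow_of_nonneg _ _ h0.le,
        mul_mul_mul_comm, hcinv]
      exact mul_le_mul_right (H x y) _)
  have key2 := (ENNReal.rpow_mul_rpow_le_add _ _ h0 h1).trans key
  rw [lintegral_const_mul _ hf, lintegral_const_mul _ hg, lintegral_const_mul _ hh,
    ENNReal.mul_rpow_of_nonneg _ _ h1'.le, ENNReal.mul_rpow_of_nonneg _ _ h0.le,
    mul_mul_mul_comm, hcinv] at key2
  exact (ENNReal.mul_le_mul_iff_right (by simpa using hct) (by simpa using hc0)).1 key2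

theorem tendsto_lintegral_min_natCast {α : Type*} [MeasurableSpace α] (μ : Measure α)
    {f : α → ℝ≥0∞} (hf : Measurable f) :
    Filter.Tendsto (fun n : ℕ => ∫⁻ x, min (f x) n ∂μ) Filter.atTop (𝓝 (∫⁻ x, f x ∂μ)) := by
  refine lintegral_tendsto_of_tendsto_of_monotone
    (fun n => (hf.min measurable_const).aemeasurable) ?_ ?_
  · refine Filter.Eventually.of_forall fun x n m hnm => ?_
    exact min_le_min_left _ (by exact_mod_cast hnm)
  · refine Filter.Eventually.of_forall fun x => ?_
    have := (tendsto_const_nhds (x := f x)).min ENNReal.tendsto_nat_nhds_top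
    simpa using this

theorem prekopa_leindler_real {f g h : ℝ → ℝ≥0∞} (hf : Measurable f)
    (hg : Measurable g) (hh : Measurable h) {τ : ℝ} (h0 : 0 < τ) (h1 : τ < 1)
    (H : ∀ x y, f x ^ (1 - τ) * g y ^ τ ≤ h ((1 - τ) * x + τ * y)) :
    (∫⁻ x, f x) ^ (1 - τ) * (∫⁻ x, g x) ^ τ ≤ ∫⁻ x, h x := by
  have h1' : 0 < 1 - τ := sub_pos.2 h1
  rcases eq_or_ne (∫⁻ x, f x) 0 with hf0 | hf0
  · simp [hf0, h1']
  rcases eq_or_ne (∫⁻ x, g x) 0 with hg0 | hg0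
  · simp [hg0, h0]
  have bd : ∀ n : ℕ, (∫⁻ x, min (f x) n) ^ (1 - τ) * (∫⁻ x, min (g x) n) ^ τ ≤ ∫⁻ x, h x := by
    intro n
    refine prekopa_leindler_real_of_bounded (hf.min measurable_const) (hg.min measurable_const) hh
      h0 h1 ?_ ?_ fun x y => le_trans ?_ (H x y)
    · exact ne_top_of_le_ne_top (ENNReal.natCast_ne_top n) (iSup_le fun x => min_le_right _ _)
    · exact ne_top_of_le_ne_top (ENNReal.natCast_ne_top n) (iSup_le fun x => min_le_right _ _)
    · exact mul_le_mul' (ENNReal.rpow_le_rpow (min_le_left _ _) h1'.le)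
        (ENNReal.rpow_le_rpow (min_le_left _ _) h0.le)
  refine le_of_tendsto (ENNReal.Tendsto.mul
    ((ENNReal.continuous_rpow_const.tendsto _).comp (tendsto_lintegral_min_natCast volume hf)) ?_
    ((ENNReal.continuous_rpow_const.tendsto _).comp (tendsto_lintegral_min_natCast volume hg)) ?_)
    (Filter.Eventually.of_forall bd)
  · left
    simp [hf0, h1'.not_gt]
  · left
    simp [hg0, h0.not_gt]

theorem prekopa_leindler {n : ℕ} {f g h : (Fin n → ℝ) → ℝ≥0∞} (hf : Measurable f)
    (hg : Measurable g) (hh : Measurable h) {τ : ℝ} (h0 : 0 < τ) (h1 : τ < 1)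
    (H : ∀ x y, f x ^ (1 - τ) * g y ^ τ ≤ h ((1 - τ) • x + τ • y)) :
    (∫⁻ x, f x) ^ (1 - τ) * (∫⁻ x, g x) ^ τ ≤ ∫⁻ x, h x := by
  induction n with
  | zero =>
    rw [volume_pi, Measure.pi_of_empty _ 0]
    simpa using H 0 0
  | succ n ih =>
    have hcons : Measurable fun p : ℝ × (Fin n → ℝ) => (Fin.cons p.1 p.2 : Fin (n + 1) → ℝ) := by
      rw [measurable_pi_iff]
      intro i
      refine Fin.cases ?_ (fun j => ?_) i <;> simp <;> fun_prop
    have fub : ∀ k : (Fin (n + 1) → ℝ) → ℝ≥0∞, Measurable k →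
        ∫⁻ x, k x = ∫⁻ r : ℝ, ∫⁻ q : Fin n → ℝ, k (Fin.cons r q) := by
      intro k hk
      rw [← (volume_preserving_piFinSuccAbove (fun _ : Fin (n + 1) => ℝ) 0).symm.lintegral_comp hk]
      rw [Measure.volume_eq_prod, lintegral_prod]
      · simp [MeasurableEquiv.piFinSuccAbove, Fin.insertNthEquiv]
      · exact (hk.comp (MeasurableEquiv.measurable _)).aemeasurable
    rw [fub f hf, fub g hg, fub h hh]
    refine prekopa_leindler_real (hf.comp hcons).lintegral_prod_right'
      (hg.comp hcons).lintegral_prod_right' (hh.comp hcons).lintegral_prod_right' h0 h1 ?_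
    intro x y
    refine ih (hf.comp (hcons.comp measurable_prodMk_left))
      (hg.comp (hcons.comp measurable_prodMk_left))
      (hh.comp (hcons.comp measurable_prodMk_left)) fun p q => ?_
    refine (H _ _).trans (le_of_eq ?_)
    congr 1
    ext i
    refine Fin.cases ?_ (fun j => ?_) i <;> simp

/-- The multiplicative Brunn–Minkowski inequality in the case of equal volumes. -/
theorem volume_le_volume_combo {n : ℕ} {A B : Set (EuclideanSpace ℝ (Fin n))} (hA : IsCompact A)
    (hB : IsCompact B) (hAB : volume A = volume B) {τ : ℝ} (h0 : 0 < τ) (h1 : τ < 1) :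
    volume A ≤ volume ((1 - τ) • A + τ • B) := by
  have hC : IsCompact ((1 - τ) • A + τ • B) := (hA.smul _).add (hB.smul _)
  have toPi : ∀ S : Set (EuclideanSpace ℝ (Fin n)), IsCompact S →
      volume S = ∫⁻ x : Fin n → ℝ, S.indicator 1 (WithLp.toLp 2 x) := by
    intro S hS
    have h := (PiLp.volume_preserving_toLp (Fin n)).lintegral_comp
      (f := S.indicator (1 : EuclideanSpace ℝ (Fin n) → ℝ≥0∞))
      (measurable_one.indicator hS.measurableSet)
    rw [h, lintegral_indicator_one hS.measurableSet]
  have m : ∀ S : Set (EuclideanSpace ℝ (Fin n)), IsCompact S →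
      Measurable fun x : Fin n → ℝ =>
        S.indicator (1 : EuclideanSpace ℝ (Fin n) → ℝ≥0∞) (WithLp.toLp 2 x) := fun S hS =>
    (measurable_one.indicator hS.measurableSet).comp
      (PiLp.volume_preserving_toLp (Fin n)).measurable
  have h := prekopa_leindler (m A hA) (m B hB) (m _ hC) h0 h1 fun x y => by
    by_cases hx : WithLp.toLp 2 x ∈ A
    · by_cases hy : WithLp.toLp 2 y ∈ B
      · have : WithLp.toLp 2 ((1 - τ) • x + τ • y) ∈ (1 - τ) • A + τ • B :=
          add_mem_add (smul_mem_smul_set hx) (smul_mem_smul_set hy)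
        simp [-WithLp.toLp_add, hx, hy, this]
      · simp [hy, h0]
    · simp [hx, sub_pos.2 h1]
  rw [← toPi A hA, ← toPi B hB, ← toPi _ hC, ← hAB] at h
  rcases eq_or_ne (volume A) 0 with h' | h'
  · simp [h']
  rwa [← ENNReal.rpow_add _ _ h' hA.measure_ne_top, sub_add_cancel, ENNReal.rpow_one] at h

theorem one_add_pow_le_quadratic {t : ℝ} (h0 : 0 ≤ t) (h1 : t ≤ 1) (n : ℕ) :
    (1 + t) ^ n ≤ 1 + n * t + 4 ^ n * t ^ 2 := by
  induction n with
  | zero => simp; positivity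
  | succ n ih =>
    have h4 : (n : ℝ) + 1 ≤ 4 ^ n := by
      have : n + 1 ≤ 4 ^ n := (Nat.lt_pow_self (by norm_num : 1 < 4))
      exact_mod_cast this
    have ht2 : 0 ≤ t ^ 2 := by positivity
    have ht3 : t ^ 3 ≤ t ^ 2 := by nlinarith
    have h4' : (0 : ℝ) ≤ 4 ^ n := by positivity
    calc (1 + t) ^ (n + 1) = (1 + t) ^ n * (1 + t) := pow_succ _ _
      _ ≤ (1 + n * t + 4 ^ n * t ^ 2) * (1 + t) := by gcongr
      _ = 1 + (n + 1) * t + (n + 4 ^ n) * t ^ 2 + 4 ^ n * t ^ 3 := by ring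
      _ ≤ 1 + (n + 1) * t + (n + 4 ^ n) * t ^ 2 + 4 ^ n * t ^ 2 := by gcongr
      _ ≤ 1 + ((n + 1 : ℕ) : ℝ) * t + 4 ^ (n + 1) * t ^ 2 := by
        push_cast
        rw [pow_succ 4 n]
        nlinarith

theorem pow_mul_one_add_pow_le {m : ℕ} (hm : 2 ≤ m) {t : ℝ} (h0 : 0 ≤ t) (h1 : t ≤ 1) {j : ℕ}
    (hj : j ≤ m) :
    (1 + t) ^ (m - j) * t ^ j + t ^ (m - j) * (1 + t) ^ j ≤
      (if j = 0 then 1 else 0) + (if j = m then 1 else 0) +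
        (m * t + (2 * (m + 4 ^ m) + 1) * t ^ 2) := by
  have hb := one_add_pow_le_quadratic h0 h1 m
  have h4 : (0 : ℝ) ≤ 4 ^ m := by positivity
  have htm : t ^ m ≤ t ^ 2 := pow_le_pow_of_le_one h0 h1 hm
  have ht2 : t ^ 2 ≤ t := by nlinarith
  have hm0 : (2 : ℝ) ≤ m := by exact_mod_cast hm
  have ht2' : 0 ≤ t ^ 2 := by positivity
  rcases eq_or_ne j 0 with rfl | hj0
  · rw [if_pos rfl, if_neg (by omega)]
    simp only [Nat.sub_zero, pow_zero, mul_one]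
    nlinarith
  rcases eq_or_ne j m with rfl | hjm
  · rw [if_pos rfl, if_neg (by omega)]
    simp only [Nat.sub_self, pow_zero, one_mul]
    nlinarith
  rw [if_neg hj0, if_neg hjm]
  have key : ∀ i k : ℕ, i ≠ 0 → k ≤ m → t ^ i * (1 + t) ^ k ≤ t + (m + 4 ^ m) * t ^ 2 := by
    intro i k hi hk
    have e1 : t ^ i ≤ t := pow_le_of_le_one h0 h1 hi
    have e2 : (1 + t) ^ k ≤ (1 + t) ^ m := pow_le_pow_right₀ (by linarith) hk
    calc t ^ i * (1 + t) ^ k ≤ t * (1 + t) ^ m := by gcongr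
      _ ≤ t * (1 + m * t + 4 ^ m * t ^ 2) := by gcongr
      _ ≤ t + (m + 4 ^ m) * t ^ 2 := by
        nlinarith [mul_nonneg h4 h0, mul_nonneg (mul_nonneg h4 h0) h0]
  have k1 := key j (m - j) hj0 (by omega)
  have k2 := key (m - j) j (by omega) hj
  rw [mul_comm (_ ^ (m - j))]
  nlinarith

theorem prod_affine_add_prod_affine_le {m : ℕ} (hm : 2 ≤ m) {t : ℝ} (h0 : 0 ≤ t) (h1 : t ≤ 1)
    {l : Fin m → ℝ} (hl : ∀ i, 0 ≤ l i) :
    (∏ i, ((1 + t) + t * l i)) + (∏ i, (t + (1 + t) * l i)) ≤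
      1 + (∏ i, l i) + (m * t + (2 * (m + 4 ^ m) + 1) * t ^ 2) * ∏ i, (1 + l i) := by
  have expand : ∀ a b : ℝ, ∏ i, (a + b * l i) =
      ∑ S : Finset (Fin m), (a ^ (m - S.card) * b ^ S.card) * ∏ i ∈ S, l i := by
    intro a b
    simp_rw [add_comm a]
    rw [Finset.prod_add, Finset.powerset_univ]
    refine Finset.sum_congr rfl fun S _ => ?_
    rw [Finset.prod_mul_distrib, Finset.prod_const, Finset.prod_const, ← Finset.compl_eq_univ_sdiff,
      Finset.card_compl, Fintype.card_fin]
    ring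
  have e3 := expand 1 1
  simp only [one_mul, one_pow, mul_one] at e3
  have e1 : (1 : ℝ) = ∑ S : Finset (Fin m), (if S.card = 0 then 1 else 0) * ∏ i ∈ S, l i := by
    simp
  have e2 : (∏ i, l i) = ∑ S : Finset (Fin m), (if S.card = m then 1 else 0) * ∏ i ∈ S, l i := by
    rw [Finset.sum_eq_single Finset.univ]
    · simp
    · intro S _ hS
      rw [if_neg, zero_mul]
      intro h
      exact hS (by rw [← Finset.card_eq_iff_eq_univ, Fintype.card_fin, h])
    · simp
  have hT := fun S : Finset (Fin m) =>
    pow_mul_one_add_pow_le hm h0 h1 (j := S.card) (by simpa using Finset.card_le_univ S)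
  rw [expand, expand, e3]
  generalize (m * t + (2 * (m + 4 ^ m) + 1) * t ^ 2 : ℝ) = C at hT ⊢
  rw [← Finset.sum_add_distrib]
  conv_rhs => rw [e1]
  rw [e2, Finset.mul_sum, ← Finset.sum_add_distrib, ← Finset.sum_add_distrib]
  refine Finset.sum_le_sum fun S _ => ?_
  rw [← add_mul, ← add_mul, ← add_mul]
  refine mul_le_mul_of_nonneg_right ?_ (Finset.prod_nonneg fun i _ => hl i)
  exact hT S

open scoped MatrixOrder Matrix in
theorem Matrix.PosDef.exists_det_smul_add_smul {n : Type*} [Fintype n] [DecidableEq n]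
    {A B : Matrix n n ℝ} (hA : A.PosDef) (hB : B.PosSemidef) :
    ∃ d : ℝ, 0 < d ∧ ∃ l : n → ℝ, (∀ i, 0 ≤ l i) ∧
      ∀ s t : ℝ, (s • A + t • B).det = d * ∏ i, (s + t * l i) := by
  obtain ⟨C, hC, hCA⟩ : ∃ C : Matrix n n ℝ, IsUnit C ∧ A = Cᴴ * C := by
    obtain ⟨C, hC, h⟩ := CStarAlgebra.isStrictlyPositive_iff_eq_star_mul_self.mp
      hA.isStrictlyPositive
    exact ⟨C, hC, h⟩
  have hdet : IsUnit C.det := (Matrix.isUnit_iff_isUnit_det C).1 hC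
  have hdetT : IsUnit Cᴴ.det := by simpa [Matrix.det_conjTranspose] using hdet
  set X := (C⁻¹)ᴴ * B * C⁻¹ with hX
  have hXp : X.PosSemidef := hB.conjTranspose_mul_mul_same C⁻¹
  have hBX : B = Cᴴ * X * C := by
    rw [hX, Matrix.conjTranspose_nonsing_inv, Matrix.mul_assoc, Matrix.mul_assoc, Matrix.mul_assoc,
      Matrix.nonsing_inv_mul C hdet, Matrix.mul_one, ← Matrix.mul_assoc,
      Matrix.mul_nonsing_inv _ hdetT, Matrix.one_mul]
  refine ⟨C.det * C.det, mul_self_pos.2 hdet.ne_zero, hXp.1.eigenvalues, hXp.eigenvalues_nonneg,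
    fun s t => ?_⟩
  have e : s • A + t • B = Cᴴ * (s • (1 : Matrix n n ℝ) + t • X) * C := by
    rw [hCA]
    nth_rewrite 1 [hBX]
    simp [Matrix.mul_add, Matrix.add_mul]
  have hdX : (s • (1 : Matrix n n ℝ) + t • X).det = ∏ i, (s + t * hXp.1.eigenvalues i) := by
    set U := hXp.1.eigenvectorUnitary
    have hs := hXp.1.spectral_theorem
    rw [Unitary.conjStarAlgAut_apply] at hs
    have hU : (U : Matrix n n ℝ) * (star U : Matrix n n ℝ) = 1 := by simp
    have : s • (1 : Matrix n n ℝ) + t • X = U * (Matrix.diagonal fun i => s + t * hXp.1.eigenvalues i) *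
        (star U : Matrix n n ℝ) := by
      have hd : (Matrix.diagonal fun i => s + t * hXp.1.eigenvalues i) = s • (1 : Matrix n n ℝ) +
          t • Matrix.diagonal (RCLike.ofReal ∘ hXp.1.eigenvalues) := by
        ext i j
        by_cases hij : i = j <;> simp [hij]
      rw [hd, Matrix.mul_add, Matrix.add_mul, Matrix.mul_smul, Matrix.mul_smul, Matrix.smul_mul,
        Matrix.smul_mul, Matrix.mul_one, hU, ← hs]
    rw [this, Matrix.det_mul, Matrix.det_mul, Matrix.det_diagonal, mul_right_comm, ← Matrix.det_mul,
      hU, Matrix.det_one, one_mul]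
  rw [e, Matrix.det_mul, Matrix.det_mul, hdX, Matrix.det_conjTranspose]
  simp
  ring

theorem ContinuousLinearMap.exists_det_smul_add_smul {m : ℕ}
    {A B : EuclideanSpace ℝ (Fin m) →L[ℝ] EuclideanSpace ℝ (Fin m)}
    (hA : ∀ v w, ⟪A v, w⟫ = ⟪v, A w⟫) (hA' : ∀ v, v ≠ 0 → 0 < ⟪A v, v⟫)
    (hB : ∀ v w, ⟪B v, w⟫ = ⟪v, B w⟫) (hB' : ∀ v, v ≠ 0 → 0 < ⟪B v, v⟫) :
    ∃ d : ℝ, 0 < d ∧ ∃ l : Fin m → ℝ, (∀ i, 0 ≤ l i) ∧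
      ∀ s t : ℝ, (s • A + t • B).det = d * ∏ i, (s + t * l i) := by
  let b := (EuclideanSpace.basisFun (Fin m) ℝ).toBasis
  have pd : ∀ T : EuclideanSpace ℝ (Fin m) →L[ℝ] EuclideanSpace ℝ (Fin m),
      (∀ v w, ⟪T v, w⟫ = ⟪v, T w⟫) → (∀ v, v ≠ 0 → 0 < ⟪T v, v⟫) →
      (LinearMap.toMatrix b b (T : EuclideanSpace ℝ (Fin m) →ₗ[ℝ] EuclideanSpace ℝ (Fin m))).PosDef := by
    intro T h1 h2
    refine Matrix.PosDef.of_dotProduct_mulVec_pos ?_ ?_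
    · ext i j
      have := h1 (b i) (b j)
      simpa [b, LinearMap.toMatrix_apply, EuclideanSpace.inner_single_left,
        EuclideanSpace.inner_single_right] using this
    · intro x hx
      have := h2 (WithLp.toLp 2 x) (by simpa using hx)
      rw [EuclideanSpace.inner_eq_star_dotProduct] at this
      have e : (LinearMap.toMatrix b b (T : EuclideanSpace ℝ (Fin m) →ₗ[ℝ] _)).mulVec x =
          (T (WithLp.toLp 2 x)).ofLp := by
        have := LinearMap.toMatrix_mulVec_repr b b (T : EuclideanSpace ℝ (Fin m) →ₗ[ℝ] _)
          (WithLp.toLp 2 x)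
        exact this
      rw [e]
      exact this
  obtain ⟨d, hd, l, hl, h⟩ := (pd A hA hA').exists_det_smul_add_smul (pd B hB hB').posSemidef
  refine ⟨d, hd, l, hl, fun s t => ?_⟩
  rw [← h s t, ContinuousLinearMap.det, ← LinearMap.det_toMatrix b]
  simp

/-- The moment of `g` on `K` against the density `exp ⟪p, ·⟫`. -/
def expMoment {m : ℕ} {F : Type*} [NormedAddCommGroup F] [NormedSpace ℝ F] (K : Set (Euc m))
    (g : Euc m → F) (p : Euc m) : F :=
  ∫ x in K, Real.exp ⟪p, x⟫ • g x

section expMoment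

variable {m : ℕ} {F : Type*} [NormedAddCommGroup F] [NormedSpace ℝ F] {K : Set (Euc m)}

theorem integrableOn_exp_inner_smul (hK : IsCompact K) {g : Euc m → F} (hg : Continuous g)
    (p : Euc m) : IntegrableOn (fun x => Real.exp ⟪p, x⟫ • g x) K :=
  ContinuousOn.integrableOn_compact hK (by fun_prop)

theorem hasFDerivAt_expMoment [CompleteSpace F] (hK : IsCompact K) {g : Euc m → F} (hg : Continuous g)
    (p : Euc m) :
    HasFDerivAt (expMoment K g)
      (expMoment K (fun x => (innerSL ℝ x).smulRight (g x)) p) p := by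
  obtain ⟨R, hR⟩ := hK.isBounded.exists_norm_le
  obtain ⟨C, hC⟩ := hK.exists_bound_of_continuousOn hg.continuousOn
  have hcont : Continuous fun x : Euc m => (innerSL ℝ x).smulRight (g x) := by
    have : Continuous fun x : Euc m => innerSL ℝ x := (innerSL ℝ).continuous
    fun_prop
  refine hasFDerivAt_integral_of_dominated_of_fderiv_le (s := Metric.ball p 1)
    (F' := fun q x => Real.exp ⟪q, x⟫ • (innerSL ℝ x).smulRight (g x))
    (bound := fun _ => Real.exp ((‖p‖ + 1) * R) * (R * C))
    (Metric.ball_mem_nhds p one_pos) ?_ ?_ ?_ ?_ ?_ ?_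
  · exact Filter.Eventually.of_forall fun q =>
      (integrableOn_exp_inner_smul hK hg q).aestronglyMeasurable
  · exact integrableOn_exp_inner_smul hK hg p
  · exact (integrableOn_exp_inner_smul hK hcont p).aestronglyMeasurable
  · refine (ae_restrict_iff' hK.measurableSet).2 (Filter.Eventually.of_forall fun x hx q hq => ?_)
    have hR0 : 0 ≤ R := (norm_nonneg x).trans (hR x hx)
    have hqn : ‖q‖ ≤ ‖p‖ + 1 := by
      have := norm_le_norm_add_norm_sub p q
      rw [← dist_eq_norm, dist_comm] at this
      have := Metric.mem_ball.1 hq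
      linarith
    rw [norm_smul, ContinuousLinearMap.norm_smulRight_apply, innerSL_apply_norm, Real.norm_eq_abs,
      Real.abs_exp]
    gcongr
    · calc ⟪q, x⟫ ≤ ‖q‖ * ‖x‖ := real_inner_le_norm q x
        _ ≤ (‖p‖ + 1) * R := by gcongr; exact hR x hx
    · exact hR x hx
    · exact hC x hx
  · exact integrableOn_const hK.measure_ne_top
  · refine Filter.Eventually.of_forall fun x q _ => ?_
    have h1 : HasFDerivAt (fun q : Euc m => ⟪q, x⟫) (innerSL ℝ x) q := by
      have := (innerSL ℝ x).hasFDerivAt (x := q)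
      refine this.congr_of_eventuallyEq (Filter.Eventually.of_forall fun y => ?_)
      simp [real_inner_comm]
    have h2 := h1.exp.smul_const (g x)
    convert h2 using 1
    ext v
    simp [mul_smul]

theorem expMoment_one_pos (hK : IsConvexBody K) (p : Euc m) :
    0 < expMoment K (fun _ => (1 : ℝ)) p := by
  unfold expMoment
  have hv : 0 < volume K := 
    (isOpen_interior.measure_pos volume hK.2.2).trans_le (measure_mono interior_subset)
  rw [setIntegral_pos_iff_support_of_nonneg_ae]
  · have : Function.support (fun x : Euc m => Real.exp ⟪p, x⟫ • (1 : ℝ)) = univ := by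
      ext x; simp [(Real.exp_pos _).ne']
    rwa [this, univ_inter]
  · exact Filter.Eventually.of_forall fun x => by positivity
  · exact integrableOn_exp_inner_smul hK.2.1 continuous_const p

/-- The barycenter of `K` with respect to the density proportional to `exp ⟪p, ·⟫`. -/
def tiltedMean (K : Set (Euc m)) (p : Euc m) : Euc m :=
  (expMoment K (fun _ => (1 : ℝ)) p)⁻¹ • expMoment K (fun x => x) p

/-- The derivative of `tiltedMean`: the covariance operator of the tilted density. -/
def tiltedCov (K : Set (Euc m)) (p : Euc m) : Euc m →L[ℝ] Euc m :=
  (expMoment K (fun _ => (1 : ℝ)) p)⁻¹ •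
    (expMoment K (fun x => (innerSL ℝ x).smulRight (x - tiltedMean K p)) p)

theorem expMoment_apply {G : Type*} [NormedAddCommGroup G] [NormedSpace ℝ G] [CompleteSpace F]
    [CompleteSpace G]
    (hK : IsCompact K) {g : Euc m → F} (hg : Continuous g) (T : F →L[ℝ] G) (p : Euc m) :
    T (expMoment K g p) = expMoment K (fun x => T (g x)) p := by
  unfold expMoment
  rw [← T.integral_comp_comm (integrableOn_exp_inner_smul hK hg p)]
  simp

theorem expMoment_sub (hK : IsCompact K) {g g' : Euc m → F} (hg : Continuous g)
    (hg' : Continuous g') (p : Euc m) :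
    expMoment K (fun x => g x - g' x) p = expMoment K g p - expMoment K g' p := by
  unfold expMoment
  rw [← integral_sub (integrableOn_exp_inner_smul hK hg p) (integrableOn_exp_inner_smul hK hg' p)]
  simp [smul_sub]

theorem continuous_innerSL_smulRight {g : Euc m → F} (hg : Continuous g) :
    Continuous fun x : Euc m => (innerSL ℝ x).smulRight (g x) := by
  have : Continuous fun x : Euc m => innerSL ℝ x := (innerSL ℝ).continuous
  fun_prop

theorem hasFDerivAt_tiltedMean (hK : IsConvexBody K) (p : Euc m) :
    HasFDerivAt (tiltedMean K) (tiltedCov K p) p := by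
  have hZ := (expMoment_one_pos hK p).ne'
  have h1 := hasFDerivAt_expMoment hK.2.1 (continuous_const (y := (1 : ℝ))) p
  have h2 := hasFDerivAt_expMoment hK.2.1 (g := fun x => x) continuous_id' p
  have h3 := (((hasDerivAt_inv hZ).comp_hasFDerivAt p h1)).smul h2
  refine h3.congr_fderiv ?_
  ext1 v
  have e1 : (expMoment K (fun x => (innerSL ℝ x).smulRight (x - tiltedMean K p)) p) v =
      (expMoment K (fun x => (innerSL ℝ x).smulRight x) p) v -
        (expMoment K (fun x => (innerSL ℝ x).smulRight (1 : ℝ)) p) v • tiltedMean K p := by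
    have c1 := continuous_innerSL_smulRight (m := m) (g := fun x => x) continuous_id'
    have c2 := continuous_innerSL_smulRight (m := m) (continuous_const (y := tiltedMean K p))
    have c3 := continuous_innerSL_smulRight (m := m) (continuous_const (y := (1 : ℝ)))
    have : (expMoment K (fun x => (innerSL ℝ x).smulRight (1 : ℝ)) p) v • tiltedMean K p =
        (expMoment K (fun x => (innerSL ℝ x).smulRight (tiltedMean K p)) p) v := by
      have a1 := expMoment_apply hK.2.1 c3 (ContinuousLinearMap.apply ℝ ℝ v) p
      have a2 := expMoment_apply hK.2.1 c2 (ContinuousLinearMap.apply ℝ (Euc m) v) p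
      simp only [ContinuousLinearMap.apply_apply] at a1 a2
      rw [a1, a2]
      simp only [expMoment]
      rw [← integral_smul_const]
      simp [mul_smul]
    rw [this, ← _root_.sub_apply, ← expMoment_sub hK.2.1 c1 c2]
    congr 2
    ext x
    simp [smul_sub]
  simp only [tiltedCov, _root_.smul_apply, e1]
  simp only [tiltedMean, Function.comp, _root_.add_apply,
    _root_.smul_apply, ContinuousLinearMap.smulRight_apply, smul_sub, smul_smul,
    smul_eq_mul]
  rw [sub_eq_add_neg, ← neg_smul]
  congr 2
  field_simp

theorem inner_tiltedCov (hK : IsConvexBody K) (p v w : Euc m) :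
    ⟪tiltedCov K p v, w⟫ = (expMoment K (fun _ => (1 : ℝ)) p)⁻¹ *
      expMoment K (fun x => ⟪x - tiltedMean K p, v⟫ * ⟪x - tiltedMean K p, w⟫) p := by
  have hZ := (expMoment_one_pos hK p).ne'
  set Z := expMoment K (fun _ => (1 : ℝ)) p with hZd
  set G := tiltedMean K p with hG
  have c1 := continuous_innerSL_smulRight (m := m) (g := fun x => x - G) (by fun_prop)
  let T : (Euc m →L[ℝ] Euc m) →L[ℝ] ℝ := (innerSL ℝ w) ∘L (ContinuousLinearMap.apply ℝ (Euc m) v)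
  have hT := expMoment_apply hK.2.1 c1 T p
  have hcen : ∀ c : Euc m, expMoment K (fun x => ⟪x - G, c⟫) p = 0 := by
    intro c
    have h1 := expMoment_apply hK.2.1 (g := fun x => x - G) (by fun_prop) (innerSL ℝ c) p
    have h2 : expMoment K (fun x => x - G) p = 0 := by
      rw [expMoment_sub hK.2.1 continuous_id' continuous_const]
      have h3 : expMoment K (fun _ => G) p = Z • G := by
        simp only [hZd, expMoment]
        rw [← integral_smul_const]
        simp
      have h4 : expMoment K (fun x => x) p = Z • G := by
        rw [hG, tiltedMean, smul_smul, mul_inv_cancel₀ hZ, one_smul]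
      rw [h3, h4, sub_self]
    rw [h2, map_zero] at h1
    rw [h1]
    simp [real_inner_comm]
  have e : (fun x => ⟪x - G, v⟫ * ⟪x - G, w⟫) = fun x => T ((innerSL ℝ x).smulRight (x - G)) -
      (⟪G, v⟫ • ⟪x - G, w⟫) := by
    ext x
    simp only [T, ContinuousLinearMap.comp_apply, ContinuousLinearMap.apply_apply,
      ContinuousLinearMap.smulRight_apply, innerSL_apply_apply, inner_smul_right, smul_eq_mul]
    rw [real_inner_comm (x - G) w, inner_sub_left x G v]
    ring
  have c2 : Continuous fun x : Euc m => T ((innerSL ℝ x).smulRight (x - G)) := T.continuous.comp c1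
  rw [e, expMoment_sub hK.2.1 c2 (by fun_prop), ← hT]
  have h5 : expMoment K (fun x => ⟪G, v⟫ • ⟪x - G, w⟫) p = 0 := by
    have := expMoment_apply hK.2.1 (g := fun x => ⟪x - G, w⟫) (by fun_prop)
      (⟪G, v⟫ • ContinuousLinearMap.id ℝ ℝ) p
    rw [hcen w, map_zero] at this
    rw [this]
    rfl
  rw [h5, sub_zero]
  simp only [T, tiltedCov, ContinuousLinearMap.comp_apply, ContinuousLinearMap.apply_apply,
    innerSL_apply_apply, _root_.smul_apply, inner_smul_left]
  rw [real_inner_comm]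
  rfl

theorem inner_tiltedCov_comm (hK : IsConvexBody K) (p v w : Euc m) :
    ⟪tiltedCov K p v, w⟫ = ⟪v, tiltedCov K p w⟫ := by
  rw [real_inner_comm, ← real_inner_comm, inner_tiltedCov hK, real_inner_comm, inner_tiltedCov hK]
  simp only [mul_comm]

theorem inner_tiltedCov_self_pos (hK : IsConvexBody K) (p : Euc m) {v : Euc m} (hv : v ≠ 0) :
    0 < ⟪tiltedCov K p v, v⟫ := by
  rw [inner_tiltedCov hK]
  refine mul_pos (inv_pos.2 (expMoment_one_pos hK p)) ?_
  set G := tiltedMean K p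
  unfold expMoment
  rw [setIntegral_pos_iff_support_of_nonneg_ae]
  · have ho : IsOpen ({x | ⟪x - G, v⟫ ≠ 0} ∩ interior K) :=
      (isOpen_ne_fun (by fun_prop) (by fun_prop)).inter isOpen_interior
    have hne : ({x | ⟪x - G, v⟫ ≠ 0} ∩ interior K).Nonempty := by
      obtain ⟨x, hx⟩ := hK.2.2
      by_cases h : ⟪x - G, v⟫ = 0
      · have hc : Continuous fun s : ℝ => x + s • v := by fun_prop
        have hnh : (fun s : ℝ => x + s • v) ⁻¹' interior K ∈ 𝓝 (0 : ℝ) :=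
          hc.continuousAt.preimage_mem_nhds (by simpa using isOpen_interior.mem_nhds hx)
        obtain ⟨s, hs, hs'⟩ := Filter.nonempty_of_mem (Filter.inter_mem
          (mem_nhdsWithin_of_mem_nhds hnh) (self_mem_nhdsWithin (a := (0 : ℝ)) (s := {0}ᶜ)))
        refine ⟨x + s • v, ?_, hs⟩
        have : x + s • v - G = (x - G) + s • v := by abel
        simp only [mem_ofPred_eq]
        rw [this, inner_add_left, h, zero_add, inner_smul_left]
        exact mul_ne_zero (by simpa using hs') (by simpa using hv)
      · exact ⟨x, h, hx⟩
    refine lt_of_lt_of_le (ho.measure_pos volume hne) (measure_mono ?_)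
    rintro x ⟨hx, hxK⟩
    refine ⟨?_, interior_subset hxK⟩
    simp only [Function.mem_support, smul_eq_mul]
    exact mul_ne_zero (Real.exp_pos _).ne' (mul_ne_zero hx hx)
  · exact Filter.Eventually.of_forall fun x =>
      smul_nonneg (Real.exp_pos _).le (mul_self_nonneg _)
  · exact integrableOn_exp_inner_smul hK.2.1 (by fun_prop) p

theorem tiltedMean_mem (hK : IsConvexBody K) (p : Euc m) : tiltedMean K p ∈ K := by
  by_contra h
  obtain ⟨f, u, hu, hu'⟩ := geometric_hahn_banach_closed_point hK.1 hK.2.1.isClosed h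
  have hZ := expMoment_one_pos hK p
  have h1 : f (tiltedMean K p) =
      (expMoment K (fun _ => (1 : ℝ)) p)⁻¹ * expMoment K (fun x => f x) p := by
    rw [tiltedMean, map_smul, expMoment_apply hK.2.1 continuous_id' f p, smul_eq_mul]
  have h2 : expMoment K (fun x => f x) p ≤ expMoment K (fun _ => (1 : ℝ)) p * u := by
    unfold expMoment
    rw [← integral_mul_const]
    refine setIntegral_mono_on (integrableOn_exp_inner_smul hK.2.1 f.continuous p)
      (Integrable.mul_const (integrableOn_exp_inner_smul hK.2.1 (g := fun _ => (1 : ℝ))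
        continuous_const p) u)
      hK.2.1.measurableSet fun x hx => ?_
    simp only [smul_eq_mul, mul_one]
    exact mul_le_mul_of_nonneg_left (hu x hx).le (Real.exp_pos _).le
  rw [h1, inv_mul_eq_div, lt_div_iff₀ hZ, mul_comm] at hu'
  exact absurd h2 (not_le.2 hu')

end expMoment

section TiltedMean

variable {m : ℕ} {K L : Set (Euc m)}

theorem injective_of_inner_fderiv_pos {F : Euc m → Euc m} {F' : Euc m → Euc m →L[ℝ] Euc m}
    (hF : ∀ p, HasFDerivAt F (F' p) p) (hpos : ∀ p v, v ≠ 0 → 0 < ⟪F' p v, v⟫) :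
    Function.Injective F := by
  intro p q hpq
  by_contra hne
  have hv : q - p ≠ 0 := sub_ne_zero.2 (Ne.symm hne)
  have hd : ∀ r : ℝ, HasDerivAt (fun r : ℝ => ⟪F (p + r • (q - p)), q - p⟫)
      ⟪F' (p + r • (q - p)) (q - p), q - p⟫ r := by
    intro r
    have h1 : HasDerivAt (fun r : ℝ => p + r • (q - p)) (q - p) r := by
      simpa using ((hasDerivAt_id r).smul_const (q - p)).const_add p
    have h2 := (hF (p + r • (q - p))).comp_hasDerivAt r h1
    simpa using h2.inner ℝ (hasDerivAt_const r (q - p))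
  have hmono := strictMono_of_hasDerivAt_pos hd fun r => hpos _ _ hv
  have := hmono (zero_lt_one' ℝ)
  simp [hpq] at this

theorem hasFDerivAt_log_expMoment (hK : IsConvexBody K) (p : Euc m) :
    HasFDerivAt (fun p => Real.log (expMoment K (fun _ => (1 : ℝ)) p))
      (innerSL ℝ (tiltedMean K p)) p := by
  have hZ := (expMoment_one_pos hK p).ne'
  have h1 := (hasFDerivAt_expMoment hK.2.1 (continuous_const (y := (1 : ℝ))) p).log hZ
  refine h1.congr_fderiv ?_
  ext1 v
  have a1 := expMoment_apply hK.2.1 (continuous_innerSL_smulRight (m := m)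
    (continuous_const (y := (1 : ℝ)))) (ContinuousLinearMap.apply ℝ ℝ v) p
  have a2 := expMoment_apply hK.2.1 continuous_id' (innerSL ℝ v) p
  simp only [ContinuousLinearMap.apply_apply] at a1
  simp only [_root_.smul_apply, a1, innerSL_apply_apply, tiltedMean, inner_smul_left] at a2 ⊢
  rw [real_inner_comm, a2]
  simp [real_inner_comm]

theorem le_expMoment_one (hK : IsConvexBody K) {D θ : ℝ} (hD : ∀ x ∈ K, ∀ y ∈ K, ‖x - y‖ ≤ D)
    (h0 : 0 ≤ θ) (h1 : θ ≤ 1) {x : Euc m} (hx : x ∈ K) (p : Euc m) :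
    θ ^ m * volume.real K * Real.exp (⟪p, x⟫ - θ * ‖p‖ * D) ≤
      expMoment K (fun _ => (1 : ℝ)) p := by
  have hsub : AffineMap.homothety x θ '' K ⊆ K := by
    rintro _ ⟨y, hy, rfl⟩
    rw [AffineMap.homothety_eq_lineMap]
    exact hK.1.lineMap_mem hx hy ⟨h0, h1⟩
  have hcomp : IsCompact (AffineMap.homothety x θ '' K) :=
    hK.2.1.image (AffineMap.homothety_continuous x θ)
  have hvol : volume.real (AffineMap.homothety x θ '' K) = θ ^ m * volume.real K := by
    rw [Measure.real, Measure.addHaar_image_homothety, ENNReal.toReal_mul, ENNReal.toReal_ofReal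
      (abs_nonneg _), finrank_euclideanSpace_fin, abs_of_nonneg (by positivity), Measure.real]
  calc θ ^ m * volume.real K * Real.exp (⟪p, x⟫ - θ * ‖p‖ * D)
      = ∫ _ in AffineMap.homothety x θ '' K, Real.exp (⟪p, x⟫ - θ * ‖p‖ * D) := by
        rw [setIntegral_const, hvol, smul_eq_mul]
    _ ≤ ∫ y in AffineMap.homothety x θ '' K, Real.exp ⟪p, y⟫ • (1 : ℝ) := by
        refine setIntegral_mono_on (integrableOn_const hcomp.measure_ne_top)
          (integrableOn_exp_inner_smul hcomp continuous_const p) hcomp.measurableSet ?_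
        rintro _ ⟨y, hy, rfl⟩
        rw [smul_eq_mul, mul_one, Real.exp_le_exp, AffineMap.homothety_apply, vsub_eq_sub,
          vadd_eq_add, inner_add_right, inner_smul_right]
        have := (abs_le.1 (abs_real_inner_le_norm p (y - x))).1
        have h2 : ‖p‖ * ‖y - x‖ ≤ ‖p‖ * D := by gcongr; exact hD y hy x hx
        nlinarith
    _ ≤ expMoment K (fun _ => (1 : ℝ)) p :=
        setIntegral_mono_set (integrableOn_exp_inner_smul hK.2.1 continuous_const p)
          (Filter.Eventually.of_forall fun x => by positivity) (LE.le.eventuallyLE hsub)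

theorem log_expMoment_one_ge (hK : IsConvexBody K) {D θ : ℝ}
    (hD : ∀ x ∈ K, ∀ y ∈ K, ‖x - y‖ ≤ D)
    (h0 : 0 < θ) (h1 : θ ≤ 1) {x : Euc m} (hx : x ∈ K) (p : Euc m) :
    Real.log (θ ^ m * volume.real K) + (⟪p, x⟫ - θ * ‖p‖ * D) ≤
      Real.log (expMoment K (fun _ => (1 : ℝ)) p) := by
  have hv : 0 < volume.real K := ENNReal.toReal_pos
    ((isOpen_interior.measure_pos volume hK.2.2).trans_le (measure_mono interior_subset)).ne'
    hK.2.1.measure_ne_top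
  rw [← Real.log_exp (⟪p, x⟫ - θ * ‖p‖ * D), ← Real.log_mul (by positivity) (Real.exp_pos _).ne']
  exact Real.log_le_log (by positivity) (le_expMoment_one hK hD h0.le h1 hx p)

theorem interior_subset_range_tiltedMean (hK : IsConvexBody K) (hL : IsConvexBody L) {s t : ℝ}
    (hs : 0 < s) (ht : 0 < t) :
    interior (s • K + t • L) ⊆ range fun p => s • tiltedMean K p + t • tiltedMean L p := by
  intro z hz
  obtain ⟨r, hr, hball⟩ := Metric.mem_nhds_iff.1 (mem_interior_iff_mem_nhds.1 hz)
  obtain ⟨D₁, hD₁⟩ := Metric.isBounded_iff.1 hK.2.1.isBounded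
  obtain ⟨D₂, hD₂⟩ := Metric.isBounded_iff.1 hL.2.1.isBounded
  set D := max 1 (max D₁ D₂)
  have hDK : ∀ x ∈ K, ∀ y ∈ K, ‖x - y‖ ≤ D := fun x hx y hy => by
    rw [← dist_eq_norm]
    exact (hD₁ hx hy).trans ((le_max_left _ _).trans (le_max_right _ _))
  have hDL : ∀ x ∈ L, ∀ y ∈ L, ‖x - y‖ ≤ D := fun x hx y hy => by
    rw [← dist_eq_norm]
    exact (hD₂ hx hy).trans ((le_max_right _ _).trans (le_max_right _ _))
  have hD1 : 1 ≤ D := le_max_left _ _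
  set θ := min 1 (r / (4 * D * (s + t)))
  have hθ0 : 0 < θ := lt_min one_pos (by positivity)
  have hθ1 : θ ≤ 1 := min_le_left _ _
  have hθr : θ * D * (s + t) ≤ r / 4 := by
    have : θ ≤ r / (4 * D * (s + t)) := min_le_right _ _
    rw [le_div_iff₀ (by positivity)] at this
    linarith
  set Φ : Euc m → ℝ := fun p => s * Real.log (expMoment K (fun _ => (1 : ℝ)) p) +
    t * Real.log (expMoment L (fun _ => (1 : ℝ)) p) - ⟪p, z⟫ with hΦ
  have hderiv : ∀ p, HasFDerivAt Φ (s • innerSL ℝ (tiltedMean K p) +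
      t • innerSL ℝ (tiltedMean L p) - innerSL ℝ z) p := by
    intro p
    have h3 : HasFDerivAt (fun q : Euc m => ⟪q, z⟫) (innerSL ℝ z) p := by
      refine (innerSL ℝ z).hasFDerivAt.congr_of_eventuallyEq (Filter.Eventually.of_forall fun y => ?_)
      simp [real_inner_comm]
    exact (((hasFDerivAt_log_expMoment hK p).const_mul s).add
      ((hasFDerivAt_log_expMoment hL p).const_mul t)).sub h3
  have hcont : Continuous Φ := continuous_iff_continuousAt.2 fun p => (hderiv p).continuousAt
  set c := s * Real.log (θ ^ m * volume.real K) + t * Real.log (θ ^ m * volume.real L)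
  have hcoer : ∀ p, c + r / 4 * ‖p‖ ≤ Φ p := by
    intro p
    have hmem : z + (r / 2 * ‖p‖⁻¹) • p ∈ s • K + t • L := by
      apply hball
      rw [Metric.mem_ball, dist_eq_norm, add_sub_cancel_left, norm_smul, Real.norm_eq_abs,
        abs_of_nonneg (by positivity), mul_assoc]
      rcases eq_or_ne p 0 with rfl | hp
      · simpa using hr
      · rw [inv_mul_cancel₀ (norm_ne_zero_iff.2 hp)]; linarith
    obtain ⟨_, ⟨x, hx, rfl⟩, _, ⟨y, hy, rfl⟩, hxy⟩ := hmem
    have e := congrArg (fun w => ⟪p, w⟫) hxy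
    simp only [inner_add_right, inner_smul_right, real_inner_self_eq_norm_sq] at e
    have e2 : r / 2 * ‖p‖⁻¹ * ‖p‖ ^ 2 = r / 2 * ‖p‖ := by
      rcases eq_or_ne p 0 with rfl | hp
      · simp
      · have := norm_ne_zero_iff.2 hp
        field_simp
    have b1 := mul_le_mul_of_nonneg_left (log_expMoment_one_ge hK hDK hθ0 hθ1 hx p) hs.le
    have b2 := mul_le_mul_of_nonneg_left (log_expMoment_one_ge hL hDL hθ0 hθ1 hy p) ht.le
    have b3 := mul_le_mul_of_nonneg_right hθr (norm_nonneg p)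
    simp only [hΦ, c]
    nlinarith
  obtain ⟨p, hp⟩ := hcont.exists_forall_le (Filter.tendsto_atTop_mono hcoer
    (Filter.tendsto_atTop_add_const_left _ _
      ((tendsto_norm_cocompact_atTop (E := Euc m)).const_mul_atTop (by positivity))))
  refine ⟨p, ?_⟩
  have h0 := IsLocalMin.hasFDerivAt_eq_zero (Filter.Eventually.of_forall hp) (hderiv p)
  refine ext_inner_right ℝ fun v => ?_
  have := congrArg (fun f => f v) h0
  simp only [_root_.sub_apply, _root_.add_apply, _root_.smul_apply, innerSL_apply_apply,
    smul_eq_mul, zero_apply] at this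
  simp only [inner_add_left, inner_smul_left, conj_trivial]
  linarith

theorem hasFDerivAt_smul_tiltedMean_add (hK : IsConvexBody K) (hL : IsConvexBody L) (s t : ℝ)
    (p : Euc m) : HasFDerivAt (fun p => s • tiltedMean K p + t • tiltedMean L p)
      (s • tiltedCov K p + t • tiltedCov L p) p :=
  ((hasFDerivAt_tiltedMean hK p).const_smul s).add ((hasFDerivAt_tiltedMean hL p).const_smul t)

theorem volume_smul_add_smul_le_lintegral (hK : IsConvexBody K) (hL : IsConvexBody L) {s t : ℝ}
    (hs : 0 < s) (ht : 0 < t) :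
    volume (s • K + t • L) ≤
      ∫⁻ p, ENNReal.ofReal |(s • tiltedCov K p + t • tiltedCov L p).det| := by
  have hconv : Convex ℝ (s • K + t • L) := (hK.1.smul s).add (hL.1.smul t)
  calc volume (s • K + t • L)
      ≤ volume (interior (s • K + t • L) ∪ frontier (s • K + t • L)) :=
        measure_mono (subset_closure.trans (closure_eq_interior_union_frontier _).le)
    _ ≤ volume (interior (s • K + t • L)) + volume (frontier (s • K + t • L)) :=
        measure_union_le _ _
    _ = volume (interior (s • K + t • L)) := by rw [hconv.addHaar_frontier volume, add_zero]
    _ ≤ volume ((fun p => s • tiltedMean K p + t • tiltedMean L p) '' univ) :=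
        measure_mono (by rw [image_univ]; exact interior_subset_range_tiltedMean hK hL hs ht)
    _ ≤ _ := by
        have := addHaar_image_le_lintegral_abs_det_fderiv volume MeasurableSet.univ
          fun p _ => (hasFDerivAt_smul_tiltedMean_add hK hL s t p).hasFDerivWithinAt
        simpa using this

theorem lintegral_le_volume_smul_add_smul (hK : IsConvexBody K) (hL : IsConvexBody L) {s t : ℝ}
    (hs : 0 ≤ s) (ht : 0 ≤ t) (hst : 0 < s + t) :
    ∫⁻ p, ENNReal.ofReal |(s • tiltedCov K p + t • tiltedCov L p).det| ≤
      volume (s • K + t • L) := by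
  have hinj : Function.Injective fun p => s • tiltedMean K p + t • tiltedMean L p := by
    refine injective_of_inner_fderiv_pos (hasFDerivAt_smul_tiltedMean_add hK hL s t) ?_
    intro p v hv
    simp only [_root_.add_apply, _root_.smul_apply, inner_add_left, inner_smul_left]
    have h1 := inner_tiltedCov_self_pos hK p hv
    have h2 := inner_tiltedCov_self_pos hL p hv
    simp only [conj_trivial]
    rcases hs.eq_or_lt with rfl | hs
    · have : 0 < t := by linarith
      positivity
    · have := mul_nonneg ht h2.le
      have := mul_pos hs h1
      linarith
  have := lintegral_abs_det_fderiv_eq_addHaar_image volume MeasurableSet.univ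
    (fun p _ => (hasFDerivAt_smul_tiltedMean_add hK hL s t p).hasFDerivWithinAt) hinj.injOn
  rw [Measure.restrict_univ] at this
  rw [this]
  refine measure_mono ?_
  rintro _ ⟨p, -, rfl⟩
  exact add_mem_add (smul_mem_smul_set (tiltedMean_mem hK p))
    (smul_mem_smul_set (tiltedMean_mem hL p))

theorem aemeasurable_det_tiltedCov (hK : IsConvexBody K) (hL : IsConvexBody L) (s t : ℝ) :
    AEMeasurable fun p => ENNReal.ofReal |(s • tiltedCov K p + t • tiltedCov L p).det| := by
  have := aemeasurable_ofReal_abs_det_fderivWithin volume MeasurableSet.univ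
    (fun p _ => (hasFDerivAt_smul_tiltedMean_add hK hL s t p).hasFDerivWithinAt)
  rwa [Measure.restrict_univ] at this

theorem det_tiltedCov_le (hm : 2 ≤ m) (hK : IsConvexBody K) (hL : IsConvexBody L) {t : ℝ}
    (h0 : 0 < t) (h1 : t ≤ 1) (p : Euc m) :
    ENNReal.ofReal |((1 + t) • tiltedCov K p + t • tiltedCov L p).det| +
      ENNReal.ofReal |(t • tiltedCov K p + (1 + t) • tiltedCov L p).det| ≤
    ENNReal.ofReal |((1 : ℝ) • tiltedCov K p + (0 : ℝ) • tiltedCov L p).det| +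
      ENNReal.ofReal |((0 : ℝ) • tiltedCov K p + (1 : ℝ) • tiltedCov L p).det| +
      ENNReal.ofReal (m * t + (2 * (m + 4 ^ m) + 1) * t ^ 2) *
        ENNReal.ofReal |((1 : ℝ) • tiltedCov K p + (1 : ℝ) • tiltedCov L p).det| := by
  obtain ⟨d, hd, l, hl, hdet⟩ := ContinuousLinearMap.exists_det_smul_add_smul
    (A := tiltedCov K p) (B := tiltedCov L p)
    (inner_tiltedCov_comm hK p) (fun v hv => inner_tiltedCov_self_pos hK p hv)
    (inner_tiltedCov_comm hL p) (fun v hv => inner_tiltedCov_self_pos hL p hv)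
  have hnn : ∀ s r : ℝ, 0 ≤ s → 0 ≤ r → 0 ≤ d * ∏ i, (s + r * l i) := fun s r hs hr =>
    mul_nonneg hd.le (Finset.prod_nonneg fun i _ => add_nonneg hs (mul_nonneg hr (hl i)))
  simp only [hdet]
  rw [abs_of_nonneg (hnn _ _ (by positivity) h0.le), abs_of_nonneg (hnn _ _ h0.le (by positivity)),
    abs_of_nonneg (hnn _ _ zero_le_one le_rfl), abs_of_nonneg (hnn _ _ le_rfl zero_le_one),
    abs_of_nonneg (hnn _ _ zero_le_one zero_le_one),
    ← ENNReal.ofReal_add (hnn _ _ (by positivity) h0.le) (hnn _ _ h0.le (by positivity)),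
    ← ENNReal.ofReal_add (hnn _ _ zero_le_one le_rfl) (hnn _ _ le_rfl zero_le_one),
    ← ENNReal.ofReal_mul (by positivity), ← ENNReal.ofReal_add
      (add_nonneg (hnn _ _ zero_le_one le_rfl) (hnn _ _ le_rfl zero_le_one))
      (mul_nonneg (by positivity) (hnn _ _ zero_le_one zero_le_one))]
  refine ENNReal.ofReal_le_ofReal ?_
  have := mul_le_mul_of_nonneg_left (prod_affine_add_prod_affine_le hm h0.le h1 hl) hd.le
  simp only [zero_mul, add_zero, Finset.prod_const_one, zero_add, one_mul]
  linarith

theorem volume_perturbation_le (hm : 2 ≤ m) (hK : IsConvexBody K) (hL : IsConvexBody L) {t : ℝ}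
    (h0 : 0 < t) (h1 : t ≤ 1) :
    volume (K + t • (K + L)) + volume (L + t • (K + L)) ≤ volume K + volume L +
      ENNReal.ofReal (m * t + (2 * (m + 4 ^ m) + 1) * t ^ 2) * volume (K + L) := by
  have hKne : K.Nonempty := hK.2.2.mono interior_subset
  have hLne : L.Nonempty := hL.2.2.mono interior_subset
  have e1 : K + t • (K + L) = (1 + t) • K + t • L := by
    rw [smul_add, ← add_assoc, hK.1.add_smul zero_le_one h0.le, one_smul]
  have e2 : L + t • (K + L) = t • K + (1 + t) • L := by
    rw [smul_add, hL.1.add_smul zero_le_one h0.le, one_smul, add_left_comm]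
  have e3 : K = (1 : ℝ) • K + (0 : ℝ) • L := by rw [zero_smul_set hLne, one_smul, add_zero]
  have e4 : L = (0 : ℝ) • K + (1 : ℝ) • L := by rw [zero_smul_set hKne, one_smul, zero_add]
  have e5 : K + L = (1 : ℝ) • K + (1 : ℝ) • L := by rw [one_smul, one_smul]
  have v1 := lintegral_le_volume_smul_add_smul hK hL zero_le_one le_rfl (by norm_num)
  have v2 := lintegral_le_volume_smul_add_smul hK hL le_rfl zero_le_one (by norm_num)
  have v3 := lintegral_le_volume_smul_add_smul hK hL zero_le_one zero_le_one (by norm_num)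
  rw [← e3] at v1
  rw [← e4] at v2
  rw [← e5] at v3
  rw [e1, e2]
  refine (add_le_add (volume_smul_add_smul_le_lintegral hK hL (by positivity) h0)
    (volume_smul_add_smul_le_lintegral hK hL h0 (by positivity))).trans ?_
  rw [← lintegral_add_left' (aemeasurable_det_tiltedCov hK hL _ _)]
  refine (lintegral_mono fun p => det_tiltedCov_le hm hK hL h0 h1 p).trans ?_
  rw [lintegral_add_right' _ ((aemeasurable_det_tiltedCov hK hL _ _).const_mul _),
    lintegral_add_left' (aemeasurable_det_tiltedCov hK hL _ _),
    lintegral_const_mul' _ _ ENNReal.ofReal_ne_top]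
  gcongr

end TiltedMean

section Projection

variable {k : ℕ}

theorem exists_orthogonal_splitting {u : Euc (k + 1)} (hu : ‖u‖ = 1) :
    ∃ P : Euc (k + 1) →L[ℝ] Euc k, (∀ v, ‖v‖ ^ 2 = ⟪v, u⟫ ^ 2 + ‖P v‖ ^ 2) ∧
      MeasurePreserving (fun v => (⟪v, u⟫, P v)) volume
        ((volume : Measure ℝ).prod (volume : Measure (Euc k))) := by
  have hon : Orthonormal ℝ (Set.domRestrict {(0 : Fin (k + 1))} fun _ => u) := by
    rw [orthonormal_iff_ite]
    rintro ⟨i, hi⟩ ⟨j, hj⟩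
    rw [mem_singleton_iff] at hi hj
    subst hi hj
    simp [Set.domRestrict, hu]
  obtain ⟨b, hb⟩ := hon.exists_orthonormalBasis_extension_of_card_eq (by simp)
  have hb0 : b 0 = u := hb 0 rfl
  let Q : Euc (k + 1) →ₗ[ℝ] Euc k :=
    { toFun := fun v => WithLp.toLp 2 fun j => b.repr v (Fin.succ j)
      map_add' := fun v w => by ext; simp
      map_smul' := fun r v => by ext; simp }
  refine ⟨LinearMap.toContinuousLinearMap Q, fun v => ?_, ?_⟩
  · rw [← b.repr.norm_map v, EuclideanSpace.norm_sq_eq, EuclideanSpace.norm_sq_eq, Fin.sum_univ_succ]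
    simp [Q, OrthonormalBasis.repr_apply_apply, hb0, real_inner_comm]
  · have h1 := (b.repr).measurePreserving
    have h2 := PiLp.volume_preserving_ofLp (Fin (k + 1))
    have h3 := volume_preserving_piFinSuccAbove (fun _ : Fin (k + 1) => ℝ) 0
    have h4 := (MeasurePreserving.id (volume : Measure ℝ)).prod
      (PiLp.volume_preserving_toLp (Fin k))
    have h5 := ((h4.comp h3).comp h2).comp h1
    have e : (fun v => (⟪v, u⟫, (LinearMap.toContinuousLinearMap Q) v)) =
        ((Prod.map id (WithLp.toLp 2) ∘ (MeasurableEquiv.piFinSuccAbove (fun _ => ℝ) 0)) ∘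
          WithLp.ofLp) ∘ b.repr := by
      funext v
      refine Prod.ext ?_ ?_
      · simp [hb0, OrthonormalBasis.repr_apply_apply, real_inner_comm,
          MeasurableEquiv.piFinSuccAbove]
      · ext j
        simp [Q, MeasurableEquiv.piFinSuccAbove, Fin.tail]
    rw [e]
    exact h5

theorem exists_oblique_splitting {u w : Euc (k + 1)} (hu : ‖u‖ = 1) (hw : 0 < ⟪w, u⟫) :
    ∃ P : Euc (k + 1) →L[ℝ] Euc k, P w = 0 ∧
      (∀ v, ‖v‖ ≤ ‖P v‖ + (1 + ‖w‖ / ⟪w, u⟫) * |⟪v, u⟫|) ∧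
      MeasurePreserving (fun v => (⟪v, u⟫, P v)) volume
        ((volume : Measure ℝ).prod (volume : Measure (Euc k))) := by
  obtain ⟨P, hP, hmp⟩ := exists_orthogonal_splitting hu
  have hPle : ∀ v, ‖P v‖ ≤ ‖v‖ := fun v =>
    abs_le_of_sq_le_sq' (by have := hP v; nlinarith [sq_nonneg ⟪v, u⟫]) (norm_nonneg v) |>.2
  have hle : ∀ v, ‖v‖ ≤ |⟪v, u⟫| + ‖P v‖ := fun v => by
    refine abs_le_of_sq_le_sq' ?_ (by positivity) |>.2
    have := hP v
    have := sq_abs ⟪v, u⟫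
    have : 0 ≤ |⟪v, u⟫| * ‖P v‖ := by positivity
    nlinarith
  refine ⟨P - (⟪w, u⟫⁻¹ • innerSL ℝ u).smulRight (P w), ?_, fun v => ?_, ?_⟩
  · rw [real_inner_comm] at hw
    simp [real_inner_comm, hw.ne']
  · have h1 : ‖P v‖ ≤ ‖(P - (⟪w, u⟫⁻¹ • innerSL ℝ u).smulRight (P w)) v‖ +
        ‖w‖ / ⟪w, u⟫ * |⟪v, u⟫| := by
      have h2 : P v = (P - (⟪w, u⟫⁻¹ • innerSL ℝ u).smulRight (P w)) v +
          (⟪w, u⟫⁻¹ * ⟪v, u⟫) • P w := by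
        simp [real_inner_comm]
      calc ‖P v‖ ≤ _ + ‖(⟪w, u⟫⁻¹ * ⟪v, u⟫) • P w‖ := by
            conv_lhs => rw [h2]
            exact norm_add_le _ _
        _ ≤ _ := by
            gcongr
            rw [norm_smul, norm_mul, norm_inv, Real.norm_of_nonneg hw.le, Real.norm_eq_abs,
              div_eq_inv_mul, mul_right_comm]
            gcongr
            exact hPle w
    linarith [hle v]
  · have hs : MeasurePreserving
        (fun p : ℝ × Euc k => (id p.1, p.2 - (⟪w, u⟫⁻¹ * p.1) • P w))
        ((volume : Measure ℝ).prod (volume : Measure (Euc k)))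
        ((volume : Measure ℝ).prod (volume : Measure (Euc k))) :=
      (MeasurePreserving.id volume).skew_product
        (g := fun a b => b - (⟪w, u⟫⁻¹ * a) • P w)
        (by unfold Function.uncurry; fun_prop)
        (Filter.Eventually.of_forall fun a => (measurePreserving_sub_right volume _).map_eq)
    convert hs.comp hmp using 1
    ext v <;> simp [real_inner_comm]

end Projection

section Hausdorff

variable {X Y : Type*} [EMetricSpace X] [EMetricSpace Y]

theorem antilipschitzWith_domRestrict {K : NNReal} {f : X → Y} {s : Set X}
    (h : ∀ x ∈ s, ∀ y ∈ s, edist x y ≤ K * edist (f x) (f y)) :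
    AntilipschitzWith K (s.domRestrict f) := fun x y => h x x.2 y y.2

theorem hausdorffMeasure_le_image_of_antilipschitzOn [MeasurableSpace X] [BorelSpace X]
    [MeasurableSpace Y] [BorelSpace Y] {K : NNReal} {f : X → Y} {s : Set X} {d : ℝ}
    (hd : 0 ≤ d) (h : ∀ x ∈ s, ∀ y ∈ s, edist x y ≤ K * edist (f x) (f y)) :
    μH[d] s ≤ K ^ d * μH[d] (f '' s) := by
  have h1 := (antilipschitzWith_domRestrict h).le_hausdorffMeasure_image hd univ
  rw [image_univ, range_domRestrict] at h1
  rwa [← (isometry_subtype_coe (s := s)).hausdorffMeasure_image (Or.inl hd), image_univ,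
    Subtype.range_coe] at h1

theorem dimH_le_image_of_antilipschitzOn {K : NNReal} {f : X → Y} {s : Set X}
    (h : ∀ x ∈ s, ∀ y ∈ s, edist x y ≤ K * edist (f x) (f y)) :
    dimH s ≤ dimH (f '' s) := by
  have h1 := (antilipschitzWith_domRestrict h).le_dimH_image univ
  rw [image_univ, range_domRestrict] at h1
  rwa [← (isometry_subtype_coe (s := s)).dimH_image, image_univ, Subtype.range_coe] at h1

end Hausdorff

/-- The ratio of Lebesgue measure to Hausdorff measure on `k`-dimensional Euclidean space. -/
def hausdorffFactor (k : ℕ) : NNReal :=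
  Measure.addHaarScalarFactor (volume : Measure (Euc k)) μH[k]

theorem volume_eq_hausdorffFactor_mul {k : ℕ} (s : Set (Euc k)) :
    volume s = hausdorffFactor k * μH[k] s := by
  have := Measure.isAddLeftInvariant_eq_smul (volume : Measure (Euc k)) μH[k]
  exact congrArg (fun μ : Measure (Euc k) => μ s) this

/-- The boundary points of `K` having an outward unit normal in `C`. -/
def normalPts {m : ℕ} (K C : Set (Euc m)) : Set (Euc m) :=
  {x | ∃ n ∈ C, IsOutwardNormalAt K x n}

section Normals

variable {m k : ℕ} {K : Set (Euc m)}

theorem IsConvexBody.frontier_subset (hK : IsConvexBody K) : frontier K ⊆ K :=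
  hK.2.1.isClosed.frontier_subset

theorem IsConvexBody.isCompact_frontier (hK : IsConvexBody K) : IsCompact (frontier K) :=
  hK.2.1.of_isClosed_subset isClosed_frontier hK.frontier_subset

theorem exists_isOutwardNormalAt (hK : IsConvexBody K) {x : Euc m} (hx : x ∈ frontier K) :
    ∃ n, IsOutwardNormalAt K x n := by
  obtain ⟨f, hf⟩ := geometric_hahn_banach_open_point hK.1.interior isOpen_interior hx.2
  have hle : ∀ y ∈ K, f y ≤ f x := by
    have hsub : closure (interior K) ⊆ {y | f y ≤ f x} :=
      closure_minimal (fun y hy => (hf y hy).le) (isClosed_le f.continuous continuous_const)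
    intro y hy
    rw [hK.1.closure_interior_eq_closure_of_nonempty_interior hK.2.2] at hsub
    exact hsub (subset_closure hy)
  set v := (InnerProductSpace.toDual ℝ (Euc m)).symm f
  have hv : ∀ y, f y = ⟪v, y⟫ := fun y => (InnerProductSpace.toDual_symm_apply).symm
  have hv0 : v ≠ 0 := by
    intro h0
    obtain ⟨y, hy⟩ := hK.2.2
    have := hf y hy
    simp [hv, h0] at this
  refine ⟨‖v‖⁻¹ • v, hx, norm_smul_inv_norm hv0, fun y hy => ?_⟩
  rw [inner_smul_right, real_inner_comm, inner_sub_right, ← hv, ← hv]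
  exact mul_nonpos_of_nonneg_of_nonpos (by positivity) (sub_nonpos.2 (hle y hy))

theorem isOutwardNormalAt_gaussMap (hK : IsConvexBody K) {x : Euc m} (hx : x ∈ frontier K) :
    IsOutwardNormalAt K x (gaussMap K x) := by
  have h := exists_isOutwardNormalAt hK hx
  rw [gaussMap, dif_pos h]
  exact h.choose_spec

theorem normalPts_subset_frontier (C : Set (Euc m)) : normalPts K C ⊆ frontier K := by
  rintro x ⟨n, -, hn⟩
  exact hn.1

theorem isCompact_normalPts (hK : IsConvexBody K) {C : Set (Euc m)} (hC : IsClosed C) :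
    IsCompact (normalPts K C) := by
  have hc : IsCompact ((frontier K ×ˢ (Metric.sphere (0 : Euc m) 1 ∩ C)) ∩
      {q : Euc m × Euc m | ∀ y ∈ K, ⟪y - q.1, q.2⟫ ≤ 0}) := by
    refine (hK.isCompact_frontier.prod ((isCompact_sphere 0 1).inter_right hC)).inter_right ?_
    simp only [ofPred_forall]
    exact isClosed_biInter fun y _ => isClosed_le (by fun_prop) continuous_const
  convert hc.image continuous_fst using 1
  ext x
  constructor
  · rintro ⟨n, hn, h1, h2, h3⟩
    exact ⟨(x, n), ⟨⟨h1, by simpa using h2, hn⟩, h3⟩, rfl⟩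
  · rintro ⟨⟨x, n⟩, ⟨⟨h1, h2, hn⟩, h3⟩, rfl⟩
    exact ⟨n, hn, h1, by simpa using h2, h3⟩

theorem IsOutwardNormalAt.inner_sub_le {x y n u : Euc m} {δ : ℝ} (hn : IsOutwardNormalAt K x n)
    (hy : y ∈ K) (hnu : ‖n - u‖ ≤ δ) : ⟪y - x, u⟫ ≤ δ * ‖y - x‖ := by
  have h1 : ⟪y - x, u⟫ = ⟪y - x, n⟫ - ⟪y - x, n - u⟫ := by rw [inner_sub_right]; ring
  have h2 := (abs_le.1 (abs_real_inner_le_norm (y - x) (n - u))).1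
  have h3 := hn.2.2 y hy
  have h4 : ‖y - x‖ * ‖n - u‖ ≤ ‖y - x‖ * δ := by gcongr
  linarith

theorem abs_inner_sub_le_of_mem_normalPts (hK : IsConvexBody K) {x y u : Euc m} {δ : ℝ}
    {C : Set (Euc m)} (hC : C ⊆ Metric.closedBall u δ)
    (hx : x ∈ normalPts K C) (hy : y ∈ normalPts K C) : |⟪x - y, u⟫| ≤ δ * ‖x - y‖ := by
  obtain ⟨n, hn, hnx⟩ := hx
  obtain ⟨n', hn', hny⟩ := hy
  have h1 := hnx.inner_sub_le (hK.frontier_subset hny.1) (mem_closedBall_iff_norm.1 (hC hn))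
  have h2 := hny.inner_sub_le (hK.frontier_subset hnx.1) (mem_closedBall_iff_norm.1 (hC hn'))
  rw [abs_le]
  rw [← neg_sub x y, inner_neg_left, norm_neg] at h1
  exact ⟨by linarith, h2⟩

theorem edist_le_of_norm_sub_le {E F : Type*} [NormedAddCommGroup E] [NormedAddCommGroup F]
    [NormedSpace ℝ E] [NormedSpace ℝ F] {C : ℝ} (hC : 0 ≤ C) (P : E →L[ℝ] F) {x y : E}
    (h : ‖x - y‖ ≤ C * ‖P (x - y)‖) : edist x y ≤ C.toNNReal * edist (P x) (P y) := by
  rw [edist_dist, edist_dist, dist_eq_norm, dist_eq_norm, ← map_sub]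
  rw [show ((C.toNNReal : NNReal) : ℝ≥0∞) = ENNReal.ofReal C from rfl, ← ENNReal.ofReal_mul hC]
  exact ENNReal.ofReal_le_ofReal h

theorem linearIndependent_of_isOutwardNormalAt (hK : IsConvexBody K) {x n n' : Euc m}
    (hn : IsOutwardNormalAt K x n) (hn' : IsOutwardNormalAt K x n') (hne : n ≠ n') :
    LinearIndependent ℝ ![n, n'] := by
  have h0 : n ≠ 0 := fun h => by simpa [h] using hn.2.1
  rw [LinearIndependent.pair_iff' h0]
  rintro a rfl
  have ha : |a| = 1 := by simpa [norm_smul, hn.2.1] using hn'.2.1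
  rcases (abs_eq zero_le_one).1 ha with rfl | rfl
  · simp at hne
  · obtain ⟨y, hy⟩ := hK.2.2
    have hc : Continuous fun s : ℝ => y + s • n := by fun_prop
    have hnh : (fun s : ℝ => y + s • n) ⁻¹' interior K ∈ 𝓝 (0 : ℝ) :=
      hc.continuousAt.preimage_mem_nhds (by simpa using isOpen_interior.mem_nhds hy)
    obtain ⟨s, hs, hs'⟩ := Filter.nonempty_of_mem (Filter.inter_mem
      (mem_nhdsWithin_of_mem_nhds hnh) (self_mem_nhdsWithin (a := (0 : ℝ)) (s := Ioi 0)))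
    have h1 := hn.2.2 _ (interior_subset hs)
    have h2 := hn'.2.2 y (interior_subset hy)
    simp only [inner_smul_right] at h2
    rw [add_sub_right_comm, inner_add_left, inner_smul_left, real_inner_self_eq_norm_sq, hn.2.1] at h1
    simp only [conj_trivial, mem_Ioi] at h1 hs'
    linarith

theorem exists_pos_hausdorffMeasure_normalPts_inter_eq_zero {K : Set (Euc (k + 1))}
    (hK : IsConvexBody K) {u v : Euc (k + 1)} (huv : LinearIndependent ℝ ![u, v]) :
    ∃ δ > 0, μH[k] (normalPts K (Metric.ball u δ) ∩ normalPts K (Metric.ball v δ)) = 0 := by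
  set W := Submodule.span ℝ (Set.range ![u, v])
  have hu : u ∈ W := Submodule.subset_span ⟨0, rfl⟩
  have hv : v ∈ W := Submodule.subset_span ⟨1, rfl⟩
  have hW : Module.finrank ℝ W = 2 := by simpa using finrank_span_eq_card huv
  have hWo : Module.finrank ℝ Wᗮ + 1 = k := by
    have := W.finrank_add_finrank_orthogonal
    rw [hW, finrank_euclideanSpace_fin] at this
    omega
  let P : Euc (k + 1) →L[ℝ] Wᗮ := Wᗮ.orthogonalProjectionOnto
  let T : Euc (k + 1) →L[ℝ] Wᗮ × ℝ × ℝ := P.prod ((innerSL ℝ u).prod (innerSL ℝ v))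
  have hker : LinearMap.ker (T : Euc (k + 1) →ₗ[ℝ] Wᗮ × ℝ × ℝ) = ⊥ := by
    rw [LinearMap.ker_eq_bot']
    intro w hw
    have hw' : T w = 0 := hw
    simp only [T, ContinuousLinearMap.prod_apply, Prod.mk_eq_zero, innerSL_apply_apply] at hw'
    obtain ⟨h1, h2, h3⟩ := hw'
    have hwW : w ∈ W := by
      have := (Submodule.orthogonalProjectionOnto_eq_zero_iff (K := Wᗮ)).1 h1
      rwa [Submodule.orthogonal_orthogonal] at this
    have hwo : w ∈ Wᗮ := by
      rw [Submodule.mem_orthogonal]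
      intro z hz
      induction hz using Submodule.span_induction with
      | mem z hz =>
        obtain ⟨i, rfl⟩ := hz
        fin_cases i
        · exact h2
        · exact h3
      | zero => simp
      | add a b _ _ ha hb => rw [inner_add_left, ha, hb, add_zero]
      | smul r a _ ha => rw [inner_smul_left, ha, mul_zero]
    exact (Submodule.disjoint_def.1 W.orthogonal_disjoint) w hwW hwo
  obtain ⟨C, hC0, hC⟩ := T.toLinearMap.exists_antilipschitzWith hker
  have hC' : ∀ w, ‖w‖ ≤ C * ‖T w‖ := fun w => hC.le_mul_norm (map_zero _) w
  have hCpos : (0 : ℝ) < C := hC0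
  refine ⟨1 / (2 * C), by positivity, ?_⟩
  have hdim : dimH (normalPts K (Metric.ball u (1 / (2 * C))) ∩
      normalPts K (Metric.ball v (1 / (2 * C)))) ≤ Module.finrank ℝ Wᗮ := by
    rw [← Real.dimH_univ_eq_finrank]
    refine (dimH_le_image_of_antilipschitzOn (K := (C : ℝ).toNNReal) (f := P) ?_).trans
      (dimH_mono (subset_univ _))
    rintro x ⟨hx1, hx2⟩ y ⟨hy1, hy2⟩
    refine edist_le_of_norm_sub_le hCpos.le P ?_
    have b1 := abs_inner_sub_le_of_mem_normalPts hK Metric.ball_subset_closedBall hx1 hy1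
    have b2 := abs_inner_sub_le_of_mem_normalPts hK Metric.ball_subset_closedBall hx2 hy2
    have h3 := hC' (x - y)
    by_contra! hlt
    have hpos : 0 < ‖x - y‖ := (by positivity : 0 ≤ (C : ℝ) * ‖P (x - y)‖).trans_lt hlt
    have h4 : ‖T (x - y)‖ < ‖x - y‖ / C := by
      have h5 : 1 / (2 * C) * ‖x - y‖ < ‖x - y‖ / C := by
        rw [div_mul_eq_mul_div, one_mul]
        gcongr
        linarith
      simp only [T, ContinuousLinearMap.prod_apply, Prod.norm_def, innerSL_apply_apply,
        Real.norm_eq_abs, max_lt_iff]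
      refine ⟨by rw [lt_div_iff₀ hCpos]; linarith, ?_, ?_⟩
      · rw [real_inner_comm]; linarith
      · rw [real_inner_comm]; linarith
    rw [lt_div_iff₀ hCpos] at h4
    linarith
  have := hausdorffMeasure_of_dimH_lt (d := k) (lt_of_le_of_lt hdim (by
    have : Module.finrank ℝ Wᗮ < k := by omega
    exact_mod_cast this))
  simpa using this

theorem hausdorffMeasure_multiple_normals_eq_zero {K : Set (Euc (k + 1))}
    (hK : IsConvexBody K) :
    μH[k] {x | ∃ n n', IsOutwardNormalAt K x n ∧ IsOutwardNormalAt K x n' ∧ n ≠ n'} = 0 := by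
  choose! δ hδ using fun q : Euc (k + 1) × Euc (k + 1) =>
    exists_pos_hausdorffMeasure_normalPts_inter_eq_zero hK (u := q.1) (v := q.2)
  obtain ⟨t, htQ, htc, hcov⟩ := TopologicalSpace.countable_cover_nhdsWithin
    (s := {q : Euc (k + 1) × Euc (k + 1) | LinearIndependent ℝ ![q.1, q.2]})
    (f := fun q => Metric.ball q.1 (δ q) ×ˢ Metric.ball q.2 (δ q)) fun q hq =>
      mem_nhdsWithin_of_mem_nhds (prod_mem_nhds (Metric.ball_mem_nhds _ (hδ q hq).1)
        (Metric.ball_mem_nhds _ (hδ q hq).1))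
  refine measure_mono_null (t := ⋃ q ∈ t, normalPts K (Metric.ball q.1 (δ q)) ∩
    normalPts K (Metric.ball q.2 (δ q))) ?_ ((measure_biUnion_null_iff htc).2 fun q hq =>
      (hδ q (htQ hq)).2)
  rintro x ⟨n, n', hn, hn', hne⟩
  obtain ⟨q, hq, h1, h2⟩ := mem_iUnion₂.1 (hcov (show (n, n') ∈ _ from
    linearIndependent_of_isOutwardNormalAt hK hn hn' hne))
  exact mem_iUnion₂.2 ⟨q, hq, ⟨n, h1, hn⟩, ⟨n', h2, hn'⟩⟩

theorem hausdorffMeasure_frontier_lt_top {K : Set (Euc (k + 1))} (hK : IsConvexBody K) :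
    μH[k] (frontier K) < ∞ := by
  obtain ⟨t, ht, htf, hcov⟩ := (isCompact_sphere (0 : Euc (k + 1)) 1).elim_finite_subcover_image
    (b := Metric.sphere (0 : Euc (k + 1)) 1) (c := fun u => Metric.ball u (1 / 2))
    (fun _ _ => Metric.isOpen_ball)
    (fun u hu => mem_iUnion₂.2 ⟨u, hu, Metric.mem_ball_self (by norm_num)⟩)
  have hsub : frontier K ⊆ ⋃ u ∈ t, normalPts K (Metric.ball u (1 / 2)) := by
    intro x hx
    obtain ⟨n, hn⟩ := exists_isOutwardNormalAt hK hx
    obtain ⟨u, hu, hnu⟩ := mem_iUnion₂.1 (hcov (mem_sphere_zero_iff_norm.2 hn.2.1))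
    exact mem_iUnion₂.2 ⟨u, hu, n, hnu, hn⟩
  refine (measure_mono hsub).trans_lt ((measure_biUnion_lt_top htf) fun u hu => ?_)
  obtain ⟨P, hP, -⟩ := exists_orthogonal_splitting (mem_sphere_zero_iff_norm.1 (ht hu))
  have hle : μH[k] (normalPts K (Metric.ball u (1 / 2))) ≤
      ((2 : ℝ).toNNReal : ℝ≥0∞) ^ (k : ℝ) * μH[k] (P '' normalPts K (Metric.ball u (1 / 2))) := by
    refine hausdorffMeasure_le_image_of_antilipschitzOn (Nat.cast_nonneg k) fun x hx y hy =>
      edist_le_of_norm_sub_le zero_le_two P ?_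
    have h1 := abs_inner_sub_le_of_mem_normalPts hK Metric.ball_subset_closedBall hx hy
    have h2 := hP (x - y)
    have h3 := sq_abs ⟪x - y, u⟫
    refine abs_le_of_sq_le_sq' ?_ (by positivity) |>.2
    nlinarith [abs_nonneg ⟪x - y, u⟫, norm_nonneg (x - y)]
  refine hle.trans_lt (ENNReal.mul_lt_top
    (ENNReal.rpow_lt_top_of_nonneg (Nat.cast_nonneg k) ENNReal.coe_ne_top) ?_)
  refine (measure_mono (image_mono ((normalPts_subset_frontier _).trans
    hK.frontier_subset))).trans_lt ?_
  exact (hK.2.1.image P.continuous).measure_lt_top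

theorem aemeasurable_gaussMap {K : Set (Euc (k + 1))} (hK : IsConvexBody K) :
    AEMeasurable (gaussMap K) (μH[k].restrict (frontier K)) := by
  set B := toMeasurable μH[k]
    {x | ∃ n n', IsOutwardNormalAt K x n ∧ IsOutwardNormalAt K x n' ∧ n ≠ n'}
  have hB0 : μH[k] B = 0 := by
    rw [measure_toMeasurable, hausdorffMeasure_multiple_normals_eq_zero hK]
  have hBm : MeasurableSet B := measurableSet_toMeasurable _ _
  have hBsub := subset_toMeasurable μH[k]
    {x | ∃ n n', IsOutwardNormalAt K x n ∧ IsOutwardNormalAt K x n' ∧ n ≠ n'}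
  have hF : MeasurableSet (frontier K \ B) := isClosed_frontier.measurableSet.diff hBm
  classical
  refine ⟨(frontier K \ B).indicator (gaussMap K), measurable_of_isClosed fun C hC => ?_, ?_⟩
  · rw [indicator_preimage]
    have e : gaussMap K ⁻¹' C ∩ (frontier K \ B) = normalPts K C \ B := by
      ext x
      constructor
      · rintro ⟨h1, h2, h3⟩
        exact ⟨⟨_, h1, isOutwardNormalAt_gaussMap hK h2⟩, h3⟩
      · rintro ⟨⟨n, hn, h1⟩, h2⟩
        refine ⟨?_, h1.1, h2⟩
        have h3 := isOutwardNormalAt_gaussMap hK h1.1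
        by_contra h4
        exact h2 (hBsub ⟨_, _, h1, h3, fun h => h4 (mem_preimage.2 (h ▸ hn))⟩)
    have e2 : Set.ite (frontier K \ B) (gaussMap K ⁻¹' C) (0 ⁻¹' C) =
        (gaussMap K ⁻¹' C ∩ (frontier K \ B)) ∪ (0 ⁻¹' C) \ (frontier K \ B) := rfl
    rw [e2, e]
    exact ((isCompact_normalPts hK hC).measurableSet.diff hBm).union
      ((measurable_zero hC.measurableSet).diff hF)
  · have : ∀ᵐ x ∂μH[k].restrict (frontier K), x ∉ B :=
      ae_restrict_of_ae (measure_eq_zero_iff_ae_notMem.1 hB0)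
    filter_upwards [this, ae_restrict_mem isClosed_frontier.measurableSet] with x hx hxF
    rw [indicator_of_mem (show x ∈ frontier K \ B from ⟨hxF, hx⟩)]

theorem surfMeasure_apply {K : Set (Euc (k + 1))} (hK : IsConvexBody K) {E : Set (Euc (k + 1))}
    (hE : MeasurableSet E) : surfMeasure K E = μH[k] (gaussMap K ⁻¹' E ∩ frontier K) := by
  have hk : ((k + 1 : ℕ) : ℝ) - 1 = k := by push_cast; ring
  rw [surfMeasure, hk, Measure.map_apply_of_aemeasurable (aemeasurable_gaussMap hK) hE,
    Measure.restrict_apply₀' isClosed_frontier.measurableSet.nullMeasurableSet]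

theorem surfMeasure_eq_normalPts {K : Set (Euc (k + 1))} (hK : IsConvexBody K)
    {D : Set (Euc (k + 1))} (hD : IsClosed D) : surfMeasure K D = μH[k] (normalPts K D) := by
  rw [surfMeasure_apply hK hD.measurableSet]
  refine le_antisymm (measure_mono fun x hx => ⟨_, hx.1, isOutwardNormalAt_gaussMap hK hx.2⟩) ?_
  refine (measure_mono (t := (gaussMap K ⁻¹' D ∩ frontier K) ∪
    {x | ∃ n n', IsOutwardNormalAt K x n ∧ IsOutwardNormalAt K x n' ∧ n ≠ n'}) ?_).trans ?_
  · rintro x ⟨n, hn, hx⟩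
    by_cases h : gaussMap K x ∈ D
    · exact Or.inl ⟨h, hx.1⟩
    · exact Or.inr ⟨_, _, hx, isOutwardNormalAt_gaussMap hK hx.1, fun e => h (e ▸ hn)⟩
  · refine (measure_union_le _ _).trans ?_
    rw [hausdorffMeasure_multiple_normals_eq_zero hK, add_zero]

theorem isFiniteMeasure_surfMeasure {K : Set (Euc (k + 1))} (hK : IsConvexBody K) :
    IsFiniteMeasure (surfMeasure K) :=
  ⟨by
    rw [surfMeasure_apply hK MeasurableSet.univ]
    exact (measure_mono inter_subset_right).trans_lt (hausdorffMeasure_frontier_lt_top hK)⟩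

end Normals

/-- The set swept out by `X` when translated by `s • w`, `0 ≤ s ≤ t`. -/
def sweep {m : ℕ} (X : Set (Euc m)) (w : Euc m) (t : ℝ) : Set (Euc m) :=
  (fun q : Euc m × ℝ => q.1 + q.2 • w) '' (X ×ˢ Icc 0 t)

section LowerBound

variable {m k : ℕ}

theorem isCompact_sweep {X : Set (Euc m)} (hX : IsCompact X) (w : Euc m) (t : ℝ) :
    IsCompact (sweep X w t) :=
  (hX.prod isCompact_Icc).image (by fun_prop)

theorem sweep_subset_cthickening {X : Set (Euc m)} {w : Euc m} {R t : ℝ} (hw : ‖w‖ ≤ R) :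
    sweep X w t ⊆ Metric.cthickening (t * R) X := by
  rintro _ ⟨⟨x, s⟩, ⟨hx, hs0, hst⟩, rfl⟩
  refine Metric.mem_cthickening_of_dist_le _ x _ _ hx ?_
  simp only [dist_eq_norm, add_sub_cancel_left, norm_smul, Real.norm_of_nonneg hs0]
  exact mul_le_mul hst hw (norm_nonneg _) (hs0.trans hst)

theorem volume_eq_prod_image {u : Euc (k + 1)} {P : Euc (k + 1) →L[ℝ] Euc k}
    (hmp : MeasurePreserving (fun v => (⟪v, u⟫, P v)) volume
      ((volume : Measure ℝ).prod (volume : Measure (Euc k))))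
    (hinj : ∀ v, ⟪v, u⟫ = 0 → P v = 0 → v = 0) {Z : Set (Euc (k + 1))} (hZ : IsCompact Z) :
    volume Z = ∫⁻ q, volume {σ : ℝ | ∃ z ∈ Z, ⟪z, u⟫ = σ ∧ P z = q} := by
  set Ψ : Euc (k + 1) → ℝ × Euc k := fun v => (⟪v, u⟫, P v) with hΨ
  have hΨi : Function.Injective Ψ := by
    intro x y hxy
    simp only [hΨ, Prod.mk.injEq] at hxy
    refine sub_eq_zero.1 (hinj _ ?_ ?_)
    · rw [inner_sub_left, hxy.1, sub_self]
    · rw [map_sub, hxy.2, sub_self]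
  have hm : MeasurableSet (Ψ '' Z) := (hZ.image (by fun_prop)).measurableSet
  rw [← preimage_image_eq Z hΨi, hmp.measure_preimage hm.nullMeasurableSet,
    Measure.prod_apply_symm hm, preimage_image_eq Z hΨi]
  refine lintegral_congr fun q => congrArg _ ?_
  ext σ
  simp [hΨ]

theorem ofReal_mul_volume_le_volume_sweep {u w : Euc (k + 1)} {P : Euc (k + 1) →L[ℝ] Euc k}
    (hmp : MeasurePreserving (fun v => (⟪v, u⟫, P v)) volume
      ((volume : Measure ℝ).prod (volume : Measure (Euc k))))
    (hinj : ∀ v, ⟪v, u⟫ = 0 → P v = 0 → v = 0) (hw : 0 < ⟪w, u⟫) (hPw : P w = 0)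
    {X : Set (Euc (k + 1))} (hX : IsCompact X) (t : ℝ) :
    ENNReal.ofReal (t * ⟪w, u⟫) * volume (P '' X) ≤ volume (sweep X w t) := by
  rw [volume_eq_prod_image hmp hinj (isCompact_sweep hX w t), ← setLIntegral_const]
  rw [← lintegral_indicator (hX.image P.continuous).measurableSet]
  refine lintegral_mono fun q => ?_
  by_cases hq : q ∈ P '' X
  · rw [indicator_of_mem hq]
    obtain ⟨x, hx, rfl⟩ := hq
    have : Icc ⟪x, u⟫ (⟪x, u⟫ + t * ⟪w, u⟫) ⊆
        {σ : ℝ | ∃ z ∈ sweep X w t, ⟪z, u⟫ = σ ∧ P z = P x} := by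
      rintro σ ⟨h1, h2⟩
      refine ⟨x + ((σ - ⟪x, u⟫) / ⟪w, u⟫) • w, ⟨(x, (σ - ⟪x, u⟫) / ⟪w, u⟫), ⟨hx, ?_, ?_⟩, rfl⟩,
        ?_, by simp [hPw]⟩
      · exact div_nonneg (by linarith) hw.le
      · rw [div_le_iff₀ hw]; linarith
      · rw [inner_add_left, inner_smul_left]
        simp only [conj_trivial]
        field_simp
        ring
    refine le_trans (le_of_eq ?_) (measure_mono this)
    rw [Real.volume_Icc, add_sub_cancel_left]
  · rw [indicator_of_notMem hq]
    exact zero_le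

theorem IsOutwardNormalAt.inner_sub_neg {K : Set (Euc m)} {x n y : Euc m}
    (hn : IsOutwardNormalAt K x n) (hy : y ∈ interior K) : ⟪y - x, n⟫ < 0 := by
  have hc : Continuous fun s : ℝ => y + s • n := by fun_prop
  have hnh : (fun s : ℝ => y + s • n) ⁻¹' interior K ∈ 𝓝 (0 : ℝ) :=
    hc.continuousAt.preimage_mem_nhds (by simpa using isOpen_interior.mem_nhds hy)
  obtain ⟨s, hs, hs'⟩ := Filter.nonempty_of_mem (Filter.inter_mem
    (mem_nhdsWithin_of_mem_nhds hnh) (self_mem_nhdsWithin (a := (0 : ℝ)) (s := Ioi 0)))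
  have h1 := hn.2.2 _ (interior_subset hs)
  rw [add_sub_right_comm, inner_add_left, inner_smul_left, real_inner_self_eq_norm_sq, hn.2.1] at h1
  simp only [conj_trivial, mem_Ioi] at h1 hs'
  linarith

theorem disjoint_sweep_interior {K X : Set (Euc m)} {u w : Euc m} {δ : ℝ}
    (hX : X ⊆ normalPts K (Metric.closedBall u δ)) (hw : δ * ‖w‖ ≤ ⟪w, u⟫) (t : ℝ) :
    Disjoint (interior K) (sweep X w t) := by
  rw [Set.disjoint_right]
  rintro _ ⟨⟨x, s⟩, ⟨hx, hs0, -⟩, rfl⟩ hmem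
  obtain ⟨n, hn, hxn⟩ := hX hx
  have h1 := hxn.inner_sub_neg hmem
  simp only [add_sub_cancel_left, inner_smul_left, conj_trivial] at h1
  have h2 : ⟪w, n⟫ = ⟪w, u⟫ + ⟪w, n - u⟫ := by rw [inner_sub_right]; ring
  have h3 := (abs_le.1 (abs_real_inner_le_norm w (n - u))).1
  have h4 : ‖w‖ * ‖n - u‖ ≤ ‖w‖ * δ := by
    gcongr
    exact mem_closedBall_iff_norm.1 hn
  have : 0 ≤ ⟪w, n⟫ := by linarith
  nlinarith

theorem le_volume_real_sweep {K X : Set (Euc (k + 1))} (hK : IsConvexBody K) (hX : IsCompact X)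
    {u w : Euc (k + 1)} {δ η ρ R : ℝ} (hu : ‖u‖ = 1) (hρ : 0 < ρ) (hwu : ρ ≤ ⟪w, u⟫)
    (hwR : ‖w‖ ≤ R) (hη : (1 + R / ρ) * δ ≤ η) (hη1 : η < 1)
    (hXn : X ⊆ normalPts K (Metric.closedBall u δ)) {t : ℝ} (ht : 0 ≤ t) :
    t * (hausdorffFactor k * (1 - η) ^ k * (⟪w, u⟫ * (μH[k] : Measure (Euc (k + 1))).real X)) ≤
      volume.real (sweep X w t) := by
  have hwpos : 0 < ⟪w, u⟫ := hρ.trans_le hwu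
  obtain ⟨P, hPw, hP, hmp⟩ := exists_oblique_splitting hu hwpos
  have hinj : ∀ v, ⟪v, u⟫ = 0 → P v = 0 → v = 0 := fun v h1 h2 => by
    have := hP v
    rw [h1, h2] at this
    simpa using this
  have h1η : 0 < 1 - η := by linarith
  have hR0 : 0 ≤ R := (norm_nonneg _).trans hwR
  have hhaus : μH[k] X ≤ ((1 - η)⁻¹.toNNReal : ℝ≥0∞) ^ (k : ℝ) * μH[k] (P '' X) := by
    refine hausdorffMeasure_le_image_of_antilipschitzOn (Nat.cast_nonneg k) fun x hx y hy =>
      edist_le_of_norm_sub_le (by positivity) P ?_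
    have h1 := abs_inner_sub_le_of_mem_normalPts hK subset_rfl (hXn hx) (hXn hy)
    have h2 := hP (x - y)
    have h3 : (1 + ‖w‖ / ⟪w, u⟫) * |⟪x - y, u⟫| ≤ (1 + R / ρ) * (δ * ‖x - y‖) := by gcongr
    have h4 := mul_le_mul_of_nonneg_right hη (norm_nonneg (x - y))
    rw [inv_mul_eq_div, le_div_iff₀ h1η]
    linarith
  have hPX : volume (P '' X) ≠ ∞ := (hX.image P.continuous).measure_ne_top
  have hPX' : μH[k] (P '' X) ≠ ∞ := (hX.image P.continuous).measure_ne_top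
  have hreal : (1 - η) ^ k * (μH[k] : Measure (Euc (k + 1))).real X ≤
      (μH[k] : Measure (Euc k)).real (P '' X) := by
    have := ENNReal.toReal_mono (by finiteness) hhaus
    rw [ENNReal.toReal_mul, ENNReal.rpow_natCast, ENNReal.toReal_pow, ENNReal.coe_toReal,
      Real.coe_toNNReal _ (by positivity), inv_pow, inv_mul_eq_div, le_div_iff₀ (by positivity)]
      at this
    rw [mul_comm]
    exact this
  have hmain := ENNReal.toReal_mono (isCompact_sweep hX w t).measure_ne_top
    (ofReal_mul_volume_le_volume_sweep hmp hinj hwpos hPw hX t)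
  rw [ENNReal.toReal_mul, ENNReal.toReal_ofReal (by positivity), volume_eq_hausdorffFactor_mul,
    ENNReal.toReal_mul, ENNReal.coe_toReal] at hmain
  refine le_trans ?_ hmain
  calc _ = t * ⟪w, u⟫ * (hausdorffFactor k *
        ((1 - η) ^ k * (μH[k] : Measure (Euc (k + 1))).real X)) := by ring
    _ ≤ _ := by gcongr; exact hreal

theorem exists_isCompact_lt_hausdorffMeasure {K : Set (Euc (k + 1))} (hK : IsConvexBody K)
    {E : Set (Euc (k + 1))} (hE : MeasurableSet E) {ε : ℝ} (hε : 0 < ε) :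
    ∃ X ⊆ gaussMap K ⁻¹' E ∩ frontier K, IsCompact X ∧
      (surfMeasure K).real E - ε ≤ (μH[k] : Measure (Euc (k + 1))).real X := by
  have hfin : IsFiniteMeasure (μH[k].restrict (frontier K) : Measure (Euc (k + 1))) :=
    ⟨by simpa using hausdorffMeasure_frontier_lt_top hK⟩
  by_cases hpos : (surfMeasure K).real E ≤ ε
  · exact ⟨∅, empty_subset _, isCompact_empty, by simpa using hpos⟩
  push Not at hpos
  obtain ⟨A, hA, hAm, hAE⟩ := ((aemeasurable_gaussMap hK).nullMeasurableSet_preimage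
    hE).exists_measurable_subset_ae_eq
  have hval : surfMeasure K E = μH[k].restrict (frontier K) A := by
    rw [surfMeasure_apply hK hE, measure_congr hAE,
      Measure.restrict_apply₀' isClosed_frontier.measurableSet.nullMeasurableSet]
  have hlt : ENNReal.ofReal ((surfMeasure K).real E - ε) < μH[k].restrict (frontier K) A := by
    rw [← hval, ENNReal.ofReal_lt_iff_lt_toReal (by linarith)]
    · exact sub_lt_self _ hε
    · rw [hval]; exact measure_ne_top _ _
  obtain ⟨X, hXA, hXc, hX⟩ := hAm.exists_lt_isCompact hlt
  refine ⟨X ∩ frontier K, fun x hx => ⟨hA (hXA hx.1), hx.2⟩, hXc.inter_right isClosed_frontier, ?_⟩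
  rw [Measure.restrict_apply hXc.measurableSet] at hX
  rw [ENNReal.ofReal_lt_iff_lt_toReal (by linarith)] at hX
  · exact hX.le
  · exact ((measure_mono inter_subset_right).trans_lt (hausdorffMeasure_frontier_lt_top hK)).ne

theorem eventually_volume_add_smul_ge {ι : Type*} [Fintype ι] {K N : Set (Euc (k + 1))}
    (hK : IsConvexBody K) (hN : IsCompact N) (hNc : Convex ℝ N) (h0N : (0 : Euc (k + 1)) ∈ N)
    {u w : ι → Euc (k + 1)} {E : ι → Set (Euc (k + 1))} {δ η ρ R : ℝ} (hδ : 0 ≤ δ)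
    (hu : ∀ i, ‖u i‖ = 1) (hρ : 0 < ρ) (hw : ∀ i, w i ∈ N) (hwu : ∀ i, ρ ≤ ⟪w i, u i⟫)
    (hwR : ∀ i, ‖w i‖ ≤ R) (hη : (1 + R / ρ) * δ ≤ η) (hη1 : η < 1)
    (hE : ∀ i, MeasurableSet (E i)) (hEd : Pairwise (Function.onFun Disjoint E))
    (hEδ : ∀ i, E i ⊆ Metric.closedBall (u i) δ) {A : ℝ}
    (hA : A < hausdorffFactor k * (1 - η) ^ k * ∑ i, ⟪w i, u i⟫ * (surfMeasure K).real (E i)) :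
    ∀ᶠ t in 𝓝[>] (0 : ℝ), volume.real K + t * A ≤ volume.real (K + t • N) := by
  obtain ⟨ε, hεA, hε⟩ : ∃ ε, A < hausdorffFactor k * (1 - η) ^ k *
      ∑ i, ⟪w i, u i⟫ * ((surfMeasure K).real (E i) - ε) ∧ 0 < ε := by
    have hc : Continuous fun ε : ℝ => hausdorffFactor k * (1 - η) ^ k *
      ∑ i, ⟪w i, u i⟫ * ((surfMeasure K).real (E i) - ε) := by fun_prop
    have := (continuousAt_const (x := (0 : ℝ))).eventually_lt hc.continuousAt (by simpa using hA)
    exact ((this.filter_mono nhdsWithin_le_nhds).and (self_mem_nhdsWithin (s := Ioi 0))).exists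
  choose X hXE hXc hXε using fun i => exists_isCompact_lt_hausdorffMeasure hK (hE i) hε
  have hXn : ∀ i, X i ⊆ normalPts K (Metric.closedBall (u i) δ) := fun i x hx =>
    ⟨_, hEδ i (hXE i hx).1, isOutwardNormalAt_gaussMap hK (hXE i hx).2⟩
  have hXd : ∀ i j, i ≠ j → Disjoint (X i) (X j) := fun i j hij =>
    Set.disjoint_left.2 fun x hx hx' =>
      Set.disjoint_left.1 (hEd hij) (hXE i hx).1 (hXE j hx').1
  have hdisj : ∀ᶠ t in 𝓝[>] (0 : ℝ), ∀ i j, i ≠ j →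
      Disjoint (sweep (X i) (w i) t) (sweep (X j) (w j) t) := by
    rw [Filter.eventually_all]; intro i
    rw [Filter.eventually_all]; intro j
    by_cases hij : i = j
    · simp [hij]
    obtain ⟨r, hr, hdr⟩ := (hXd i j hij).exists_cthickenings (hXc i) (hXc j).isClosed
    have hc : Continuous fun t : ℝ => t * R := by fun_prop
    have : ∀ᶠ t in 𝓝[>] (0 : ℝ), t * R < r :=
      (hc.continuousAt.eventually_lt continuousAt_const (by simpa using hr)).filter_mono
        nhdsWithin_le_nhds
    filter_upwards [this] with t ht _
    exact hdr.mono ((sweep_subset_cthickening (hwR i)).trans (Metric.cthickening_mono ht.le _))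
      ((sweep_subset_cthickening (hwR j)).trans (Metric.cthickening_mono ht.le _))
  filter_upwards [hdisj, self_mem_nhdsWithin] with t htd ht
  have ht0 : 0 < t := ht
  have hKvol : volume.real (interior K) = volume.real K := by
    have h1 := measure_sdiff_null (s := K) (t := frontier K) (hK.1.addHaar_frontier volume)
    rw [self_sdiff_frontier] at h1
    rw [Measure.real, h1, Measure.real]
  have hδw : ∀ i, δ * ‖w i‖ ≤ ⟪w i, u i⟫ := fun i => by
    have hR0 : 0 ≤ R := (norm_nonneg _).trans (hwR i)
    have h1 : R / ρ * δ ≤ 1 := by nlinarith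
    rw [div_mul_eq_mul_div, div_le_one hρ] at h1
    have h2 : δ * ‖w i‖ ≤ δ * R := mul_le_mul_of_nonneg_left (hwR i) hδ
    linarith [hwu i]
  have hsub : interior K ∪ ⋃ i, sweep (X i) (w i) t ⊆ K + t • N := by
    refine union_subset (fun x hx => ?_) (iUnion_subset fun i => ?_)
    · exact ⟨x, interior_subset hx, 0, ⟨0, h0N, by simp⟩, by simp⟩
    · rintro _ ⟨⟨x, s⟩, ⟨hx, hs0, hst⟩, rfl⟩
      refine ⟨x, hK.frontier_subset (hXE i hx).2, s • w i, ⟨(s / t) • w i, ?_, ?_⟩, rfl⟩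
      · exact hNc.smul_mem_of_zero_mem h0N (hw i) ⟨by positivity, by rw [div_le_one ht0]; exact hst⟩
      · simp only [smul_smul]
        rw [mul_div_cancel₀ _ ht0.ne']
  have hfin : volume (K + t • N) ≠ ∞ := (hK.2.1.add (hN.smul t)).measure_ne_top
  calc volume.real K + t * A
      ≤ volume.real K + ∑ i, volume.real (sweep (X i) (w i) t) := by
        gcongr
        calc t * A ≤ t * (hausdorffFactor k * (1 - η) ^ k *
              ∑ i, ⟪w i, u i⟫ * ((surfMeasure K).real (E i) - ε)) := by gcongr
          _ = ∑ i, t * (hausdorffFactor k * (1 - η) ^ k *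
              (⟪w i, u i⟫ * ((surfMeasure K).real (E i) - ε))) := by
              rw [Finset.mul_sum, Finset.mul_sum]
          _ ≤ ∑ i, volume.real (sweep (X i) (w i) t) := by
              refine Finset.sum_le_sum fun i _ => le_trans ?_ (le_volume_real_sweep hK (hXc i)
                (hu i) hρ (hwu i) (hwR i) hη hη1 (hXn i) ht0.le)
              have := hρ.le.trans (hwu i)
              have : 0 ≤ 1 - η := by linarith
              gcongr
              exact hXε i
    _ = volume.real (interior K ∪ ⋃ i, sweep (X i) (w i) t) := by
        have hsc : ∀ i, IsCompact (sweep (X i) (w i) t) := fun i => isCompact_sweep (hXc i) _ _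
        rw [measureReal_union (Set.disjoint_iUnion_right.2 fun i =>
            disjoint_sweep_interior (hXn i) (hδw i) t)
          (MeasurableSet.iUnion fun i => (hsc i).measurableSet)
          ((measure_mono interior_subset).trans_lt hK.2.1.measure_lt_top).ne
          (isCompact_iUnion hsc).measure_ne_top,
          measureReal_iUnion_fintype (fun i j hij => htd i j hij) (fun i => (hsc i).measurableSet)
            (fun i => (hsc i).measure_ne_top), hKvol]
    _ ≤ volume.real (K + t • N) := measureReal_mono hsub hfin

end LowerBound

/-- The points of `M` whose translates by `t • N` stay inside `M`. -/
def innerParallel {m : ℕ} (M N : Set (Euc m)) (t : ℝ) : Set (Euc m) :=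
  {x ∈ M | ∀ w ∈ N, x + t • w ∈ M}

/-- The points of `M` obtained from points of `Y` by subtracting `s • w`, `w ∈ N`, `0 ≤ s ≤ t`. -/
def innerShell {m : ℕ} (M Y N : Set (Euc m)) (t : ℝ) : Set (Euc m) :=
  M ∩ (fun q : Euc m × Euc m × ℝ => q.1 - q.2.2 • q.2.1) '' (Y ×ˢ N ×ˢ Icc 0 t)

section UpperBound

variable {m k : ℕ}

theorem isCompact_innerParallel {M : Set (Euc m)} (hM : IsCompact M) (N : Set (Euc m)) (t : ℝ) :
    IsCompact (innerParallel M N t) := by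
  have : innerParallel M N t = M ∩ ⋂ w ∈ N, (fun x => x + t • w) ⁻¹' M := by
    ext x
    simp [innerParallel]
  rw [this]
  exact hM.inter_right (isClosed_biInter fun w _ => hM.isClosed.preimage (by fun_prop))

theorem innerParallel_add_subset (M N : Set (Euc m)) (t : ℝ) :
    innerParallel M N t + t • N ⊆ M := by
  rintro _ ⟨x, hx, _, ⟨w, hw, rfl⟩, rfl⟩
  exact hx.2 w hw

theorem isCompact_innerShell {M Y N : Set (Euc m)} (hM : IsCompact M) (hY : IsCompact Y)
    (hN : IsCompact N) (t : ℝ) : IsCompact (innerShell M Y N t) :=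
  hM.inter ((hY.prod (hN.prod isCompact_Icc)).image (by fun_prop))

theorem exists_add_smul_mem_frontier {M : Set (Euc m)} (hM : IsCompact M) {x w : Euc m} {t : ℝ}
    (ht : 0 ≤ t) (hx : x ∈ M) (hxt : x + t • w ∉ M) :
    ∃ s ∈ Icc 0 t, x + s • w ∈ frontier M := by
  have hc : Continuous fun s : ℝ => x + s • w := by fun_prop
  have hcomp : IsCompact (Icc 0 t ∩ (fun s : ℝ => x + s • w) ⁻¹' M) :=
    isCompact_Icc.inter_right (hM.isClosed.preimage hc)
  obtain ⟨s, ⟨hs, hsM⟩, hmax⟩ := hcomp.exists_isMaxOn ⟨0, ⟨le_rfl, ht⟩, by simpa using hx⟩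
    continuousOn_id
  refine ⟨s, hs, subset_closure hsM, fun hmem => ?_⟩
  have hst : s < t := lt_of_le_of_ne hs.2 fun h => hxt (h ▸ hsM)
  have hnh : (fun s : ℝ => x + s • w) ⁻¹' interior M ∈ 𝓝 s :=
    hc.continuousAt.preimage_mem_nhds (isOpen_interior.mem_nhds hmem)
  obtain ⟨s', hs', hs''⟩ := Filter.nonempty_of_mem (Filter.inter_mem
    (mem_nhdsWithin_of_mem_nhds hnh) (Ioo_mem_nhdsGT hst))
  have := hmax ⟨⟨hs.1.trans hs''.1.le, hs''.2.le⟩, preimage_mono interior_subset hs'⟩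
  exact absurd hs''.1 (not_lt.2 this)

theorem diff_innerParallel_subset {ι : Type*} {M N : Set (Euc m)} (hM : IsConvexBody M)
    {D : ι → Set (Euc m)} (hD : Metric.sphere 0 1 ⊆ ⋃ i, D i) {t : ℝ} (ht : 0 ≤ t) :
    M \ innerParallel M N t ⊆ ⋃ i, innerShell M (normalPts M (D i)) N t := by
  rintro x ⟨hx, hxt⟩
  simp only [innerParallel, mem_ofPred_eq, not_and, not_forall] at hxt
  obtain ⟨w, hw, hxw⟩ := hxt hx
  obtain ⟨s, hs, hsx⟩ := exists_add_smul_mem_frontier hM.2.1 ht hx hxw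
  obtain ⟨n, hn⟩ := exists_isOutwardNormalAt hM hsx
  obtain ⟨i, hi⟩ := mem_iUnion.1 (hD (mem_sphere_zero_iff_norm.2 hn.2.1))
  exact mem_iUnion.2 ⟨i, hx, (x + s • w, w, s), ⟨⟨n, hi, hn⟩, hw, hs⟩, by simp⟩

theorem inner_sub_le_of_mem_innerShell {M N D : Set (Euc m)} {u : Euc m} {δ h R t : ℝ}
    (hu : ‖u‖ = 1) (hδ1 : δ < 1) (hD : D ⊆ Metric.closedBall u δ)
    (hh : ∀ w ∈ N, ⟪w, u⟫ ≤ h) (hR : ∀ w ∈ N, ‖w‖ ≤ R) (hc : 0 ≤ h + δ * R) {x x' : Euc m}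
    (hx : x ∈ innerShell M (normalPts M D) N t) (hx' : x' ∈ M)
    (hxx : x' - x = ⟪x' - x, u⟫ • u) :
    ⟪x' - x, u⟫ ≤ t * ((h + δ * R) / (1 - δ)) := by
  obtain ⟨-, ⟨y, w, s⟩, ⟨⟨n, hnD, hn⟩, hw, hs0, hst⟩, rfl⟩ := hx
  simp only at *
  set l := ⟪x' - (y - s • w), u⟫ with hl
  have hnu : ‖n - u‖ ≤ δ := mem_closedBall_iff_norm.1 (hD hnD)
  have hδ0 : 0 ≤ δ := (norm_nonneg _).trans hnu
  have h1 : l * ⟪u, n⟫ ≤ s * ⟪w, n⟫ := by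
    have e1 : l * ⟪u, n⟫ = ⟪x' - (y - s • w), n⟫ := by
      conv_rhs => rw [hxx, inner_smul_left]
      rfl
    have e2 : ⟪x' - (y - s • w), n⟫ = ⟪x' - y, n⟫ + s * ⟪w, n⟫ := by
      rw [show x' - (y - s • w) = (x' - y) + s • w by abel, inner_add_left, inner_smul_left]
      rfl
    have := hn.2.2 x' hx'
    linarith
  have h2 : 1 - δ ≤ ⟪u, n⟫ := by
    have e : ⟪u, n⟫ = 1 + ⟪u, n - u⟫ := by
      rw [inner_sub_right, real_inner_self_eq_norm_sq, hu]; ring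
    have := (abs_le.1 (abs_real_inner_le_norm u (n - u))).1
    rw [hu] at this
    linarith
  have h3 : ⟪w, n⟫ ≤ h + δ * R := by
    have e : ⟪w, n⟫ = ⟪w, u⟫ + ⟪w, n - u⟫ := by rw [inner_sub_right]; ring
    have e1 := real_inner_le_norm w (n - u)
    have e2 : ‖w‖ * ‖n - u‖ ≤ R * δ :=
      mul_le_mul (hR w hw) hnu (norm_nonneg _) ((norm_nonneg _).trans (hR w hw))
    linarith [hh w hw]
  have h4 : s * ⟪w, n⟫ ≤ t * (h + δ * R) :=
    (mul_le_mul_of_nonneg_left h3 hs0).trans (mul_le_mul_of_nonneg_right hst hc)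
  rw [← mul_div_assoc, le_div_iff₀ (by linarith)]
  rcases le_total l 0 with h0 | h0
  · nlinarith [mul_nonneg (hs0.trans hst) hc]
  · nlinarith

theorem norm_le_of_orthogonal_splitting {u : Euc (k + 1)} {P : Euc (k + 1) →L[ℝ] Euc k}
    (hP : ∀ v, ‖v‖ ^ 2 = ⟪v, u⟫ ^ 2 + ‖P v‖ ^ 2) (v : Euc (k + 1)) : ‖P v‖ ≤ ‖v‖ :=
  abs_le_of_sq_le_sq' (by have := hP v; nlinarith [sq_nonneg ⟪v, u⟫]) (norm_nonneg v) |>.2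

theorem volume_innerShell_le {M N D : Set (Euc (k + 1))} {u : Euc (k + 1)} {δ h R t : ℝ}
    {P : Euc (k + 1) →L[ℝ] Euc k} (hP : ∀ v, ‖v‖ ^ 2 = ⟪v, u⟫ ^ 2 + ‖P v‖ ^ 2)
    (hmp : MeasurePreserving (fun v => (⟪v, u⟫, P v)) volume
      ((volume : Measure ℝ).prod (volume : Measure (Euc k))))
    (hM : IsConvexBody M) (hN : IsCompact N) (hDc : IsClosed D)
    (hu : ‖u‖ = 1) (hδ1 : δ < 1) (hD : D ⊆ Metric.closedBall u δ)
    (hh : ∀ w ∈ N, ⟪w, u⟫ ≤ h) (hR : ∀ w ∈ N, ‖w‖ ≤ R) (hc : 0 ≤ h + δ * R) :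
    volume (innerShell M (normalPts M D) N t) ≤ ENNReal.ofReal (t * ((h + δ * R) / (1 - δ))) *
      volume (Metric.cthickening (t * R) (P '' normalPts M D)) := by
  have hPle := norm_le_of_orthogonal_splitting hP
  have hinj : ∀ v, ⟪v, u⟫ = 0 → P v = 0 → v = 0 := fun v h1 h2 => by
    have := hP v
    rw [h1, h2] at this
    simpa using this
  have hPu : P u = 0 := by
    have := hP u
    rw [real_inner_self_eq_norm_sq, hu] at this
    simpa using this
  rw [volume_eq_prod_image hmp hinj
    (isCompact_innerShell hM.2.1 (isCompact_normalPts hM hDc) hN t), ← setLIntegral_const,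
    ← lintegral_indicator Metric.isClosed_cthickening.measurableSet]
  refine lintegral_mono fun q => ?_
  by_cases hq : q ∈ Metric.cthickening (t * R) (P '' normalPts M D)
  · rw [indicator_of_mem hq]
    refine (Real.volume_le_diam _).trans (Metric.ediam_le ?_)
    rintro _ ⟨x, hx, rfl, hxq⟩ _ ⟨x', hx', rfl, hxq'⟩
    rw [edist_dist, Real.dist_eq]
    refine ENNReal.ofReal_le_ofReal ?_
    have key : ∀ {a b : Euc (k + 1)}, P a = q → P b = q → a - b = ⟪a - b, u⟫ • u := by
      intro a b ha hb
      refine sub_eq_zero.1 (hinj _ ?_ ?_)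
      · rw [inner_sub_left, inner_smul_left, real_inner_self_eq_norm_sq, hu]
        simp
      · simp [ha, hb, hPu]
    have h1 := inner_sub_le_of_mem_innerShell hu hδ1 hD hh hR hc hx hx'.1 (key hxq' hxq)
    have h2 := inner_sub_le_of_mem_innerShell hu hδ1 hD hh hR hc hx' hx.1 (key hxq hxq')
    rw [inner_sub_left] at h1 h2
    exact abs_le.2 ⟨by linarith, h2⟩
  · rw [indicator_of_notMem hq, nonpos_iff_eq_zero]
    have : {σ : ℝ | ∃ z ∈ innerShell M (normalPts M D) N t, ⟪z, u⟫ = σ ∧ P z = q} = ∅ := by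
      refine eq_empty_of_forall_notMem ?_
      rintro _ ⟨_, ⟨-, ⟨y, w, s⟩, ⟨hy, hw, hs0, hst⟩, rfl⟩, rfl, rfl⟩
      refine hq (Metric.mem_cthickening_of_dist_le _ (P y) _ _ (mem_image_of_mem P hy) ?_)
      rw [dist_eq_norm, ← map_sub]
      refine (hPle _).trans ?_
      simp only [sub_sub_cancel_left, norm_neg, norm_smul, Real.norm_of_nonneg hs0]
      exact mul_le_mul hst (hR w hw) (norm_nonneg _) (hs0.trans hst)
    rw [this, measure_empty]

theorem eventually_volume_le_innerParallel {ι : Type*} [Fintype ι] {M N : Set (Euc (k + 1))}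
    (hM : IsConvexBody M) (hN : IsCompact N) {u : ι → Euc (k + 1)} {D : ι → Set (Euc (k + 1))}
    {h : ι → ℝ} {δ R : ℝ} (hδ1 : δ < 1) (hu : ∀ i, ‖u i‖ = 1) (hDc : ∀ i, IsClosed (D i))
    (hDδ : ∀ i, D i ⊆ Metric.closedBall (u i) δ) (hD : Metric.sphere 0 1 ⊆ ⋃ i, D i)
    (hh : ∀ i, ∀ w ∈ N, ⟪w, u i⟫ ≤ h i) (hR : ∀ w ∈ N, ‖w‖ ≤ R) (hc : ∀ i, 0 ≤ h i + δ * R)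
    {B : ℝ}
    (hB : hausdorffFactor k * ∑ i, (h i + δ * R) / (1 - δ) * (surfMeasure M).real (D i) < B) :
    ∀ᶠ t in 𝓝[>] (0 : ℝ), volume.real M ≤ volume.real (innerParallel M N t) + t * B := by
  choose P hP hmp using fun i => exists_orthogonal_splitting (hu i)
  have hδ' : 0 < 1 - δ := by linarith
  have hYc : ∀ i, IsCompact (normalPts M (D i)) := fun i => isCompact_normalPts hM (hDc i)
  have hPYc : ∀ i, IsCompact (P i '' normalPts M (D i)) := fun i => (hYc i).image (P i).continuous
  have hvol : ∀ i, volume.real (P i '' normalPts M (D i)) ≤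
      hausdorffFactor k * (surfMeasure M).real (D i) := by
    intro i
    have hlip : LipschitzWith 1 (P i) := LipschitzWith.of_dist_le_mul fun x y => by
      rw [dist_eq_norm, dist_eq_norm, ← map_sub, NNReal.coe_one, one_mul]
      exact norm_le_of_orthogonal_splitting (hP i) _
    have := isFiniteMeasure_surfMeasure hM
    have h1 : volume (P i '' normalPts M (D i)) ≤ hausdorffFactor k * surfMeasure M (D i) := by
      rw [volume_eq_hausdorffFactor_mul, surfMeasure_eq_normalPts hM (hDc i)]
      gcongr
      simpa using hlip.hausdorffMeasure_image_le (Nat.cast_nonneg k) (normalPts M (D i))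
    have h2 := ENNReal.toReal_mono (by finiteness) h1
    rwa [ENNReal.toReal_mul, ENNReal.coe_toReal] at h2
  have htend : Filter.Tendsto (fun t : ℝ => ∑ i, (h i + δ * R) / (1 - δ) *
      volume.real (Metric.cthickening (t * R) (P i '' normalPts M (D i)))) (𝓝[>] 0)
      (𝓝 (∑ i, (h i + δ * R) / (1 - δ) * volume.real (P i '' normalPts M (D i)))) := by
    refine tendsto_finsetSum _ fun i _ => Filter.Tendsto.const_mul _ ?_
    refine (ENNReal.tendsto_toReal (hPYc i).measure_ne_top).comp
      ((tendsto_measure_cthickening_of_isCompact (hPYc i)).comp ?_)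
    have hcont : Continuous fun t : ℝ => t * R := by fun_prop
    simpa using (hcont.tendsto 0).mono_left nhdsWithin_le_nhds
  have hlt : ∑ i, (h i + δ * R) / (1 - δ) * volume.real (P i '' normalPts M (D i)) < B := by
    refine lt_of_le_of_lt ?_ hB
    rw [Finset.mul_sum]
    refine Finset.sum_le_sum fun i _ => ?_
    rw [mul_left_comm]
    exact mul_le_mul_of_nonneg_left (hvol i) (div_nonneg (hc i) hδ'.le)
  filter_upwards [htend.eventually_lt_const hlt, self_mem_nhdsWithin] with t htB ht
  have ht0 : 0 < t := ht
  have hQc : ∀ i, IsCompact (innerShell M (normalPts M (D i)) N t) := fun i =>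
    isCompact_innerShell hM.2.1 (hYc i) hN t
  have hMt := isCompact_innerParallel hM.2.1 N t
  have hsub : M ⊆ innerParallel M N t ∪ ⋃ i, innerShell M (normalPts M (D i)) N t := fun x hx => by
    by_cases hxt : x ∈ innerParallel M N t
    · exact Or.inl hxt
    · exact Or.inr (diff_innerParallel_subset hM hD ht0.le ⟨hx, hxt⟩)
  calc volume.real M
      ≤ volume.real (innerParallel M N t ∪ ⋃ i, innerShell M (normalPts M (D i)) N t) :=
        measureReal_mono hsub (hMt.union (isCompact_iUnion hQc)).measure_ne_top
    _ ≤ volume.real (innerParallel M N t) +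
        volume.real (⋃ i, innerShell M (normalPts M (D i)) N t) := measureReal_union_le _ _
    _ ≤ volume.real (innerParallel M N t) +
        ∑ i, volume.real (innerShell M (normalPts M (D i)) N t) := by
        gcongr
        exact measureReal_iUnion_fintype_le _
    _ ≤ volume.real (innerParallel M N t) + ∑ i, t * ((h i + δ * R) / (1 - δ) *
        volume.real (Metric.cthickening (t * R) (P i '' normalPts M (D i)))) := by
        gcongr with i
        have h0 : 0 ≤ (h i + δ * R) / (1 - δ) := div_nonneg (hc i) hδ'.le
        have hfin : volume (Metric.cthickening (t * R) (P i '' normalPts M (D i))) ≠ ∞ :=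
          (hPYc i).cthickening.measure_ne_top
        have := ENNReal.toReal_mono (by finiteness) (volume_innerShell_le (t := t) (hP i) (hmp i) hM
          hN (hDc i) (hu i) hδ1 (hDδ i) (hh i) hR (hc i))
        rwa [ENNReal.toReal_mul, ENNReal.toReal_ofReal (by positivity), mul_assoc] at this
    _ ≤ volume.real (innerParallel M N t) + t * B := by
        rw [← Finset.mul_sum]
        gcongr

end UpperBound

theorem exists_fine_sphere_partition {m : ℕ} (μ : Measure (Euc m)) [IsFiniteMeasure μ] {δ : ℝ}
    (hδ : 0 < δ) :
    ∃ (n : ℕ) (u : Fin n → Euc m) (E D : Fin n → Set (Euc m)), (∀ i, ‖u i‖ = 1) ∧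
      (∀ i, MeasurableSet (E i)) ∧ Pairwise (Function.onFun Disjoint E) ∧
      (∀ i, IsClosed (D i)) ∧ (∀ i, E i ⊆ D i) ∧ (∀ i, D i ⊆ Metric.closedBall (u i) δ) ∧
      Metric.sphere 0 1 ⊆ ⋃ i, D i ∧ ∀ i, μ (D i) = μ (E i) := by
  classical
  choose r hr hμr using fun u : Euc m => exists_null_frontier_thickening μ {u} hδ
  simp only [Metric.thickening_singleton] at hμr
  obtain ⟨T, hT, hTf, hcov⟩ := (isCompact_sphere (0 : Euc m) 1).elim_finite_subcover_image
    (b := Metric.sphere (0 : Euc m) 1) (c := fun u => Metric.ball u (r u))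
    (fun _ _ => Metric.isOpen_ball)
    (fun u hu => mem_biUnion hu (Metric.mem_ball_self (hr u).1))
  obtain ⟨n, u, huT⟩ : ∃ (n : ℕ) (u : Fin n → Euc m), range u = T := by
    lift T to Finset (Euc m) using hTf
    exact ⟨T.card, fun i => T.equivFin.symm i, by
      rw [show (fun i => (T.equivFin.symm i : Euc m)) = Subtype.val ∘ T.equivFin.symm from rfl,
        T.equivFin.symm.surjective.range_comp, Subtype.range_coe]⟩
  have hnull : μ (⋃ j, Metric.sphere (u j) (r (u j))) = 0 := by
    refine measure_iUnion_null fun j => ?_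
    rw [← frontier_ball (u j) (hr (u j)).1.ne']
    exact hμr _
  refine ⟨n, u, fun i => Metric.closedBall (u i) (r (u i)) \ ⋃ j ∈ Iio i,
      Metric.closedBall (u j) (r (u j)), fun i => Metric.closedBall (u i) (r (u i)) \ ⋃ j ∈ Iio i,
      Metric.ball (u j) (r (u j)), fun i => ?_, fun i => ?_, ?_, fun i => ?_, fun i => ?_,
      fun i => ?_, fun x hx => ?_, fun i => ?_⟩
  · exact mem_sphere_zero_iff_norm.1 (hT (huT ▸ mem_range_self i))
  · exact measurableSet_closedBall.diff
      (MeasurableSet.biUnion (to_countable _) fun j _ => measurableSet_closedBall)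
  · refine pairwise_disjoint_on _ |>.2 fun i j hij => Set.disjoint_left.2 fun x hx hx' => ?_
    exact hx'.2 (mem_biUnion hij hx.1)
  · exact Metric.isClosed_closedBall.sdiff (isOpen_biUnion fun j _ => Metric.isOpen_ball)
  · exact sdiff_subset_sdiff_right (biUnion_mono subset_rfl fun j _ => Metric.ball_subset_closedBall)
  · exact sdiff_subset.trans (Metric.closedBall_subset_closedBall (hr _).2.le)
  · have hne : (Finset.univ.filter fun i => x ∈ Metric.closedBall (u i) (r (u i))).Nonempty := by
      obtain ⟨v, hv, hxv⟩ := mem_iUnion₂.1 (hcov hx)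
      rw [← huT] at hv
      obtain ⟨i, rfl⟩ := hv
      exact ⟨i, by simpa using hxv.le⟩
    obtain ⟨i, hi, hmin⟩ := Finset.exists_min_image _ id hne
    refine mem_iUnion.2 ⟨i, (Finset.mem_filter.1 hi).2, fun hx' => ?_⟩
    obtain ⟨j, hj, hxj⟩ := mem_iUnion₂.1 hx'
    exact absurd hj (not_lt.2 (hmin j (by simpa using (Metric.ball_subset_closedBall hxj))))
  · refine le_antisymm ?_ (measure_mono (sdiff_subset_sdiff_right
      (biUnion_mono subset_rfl fun j _ => Metric.ball_subset_closedBall)))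
    refine (measure_mono (t := (Metric.closedBall (u i) (r (u i)) \ ⋃ j ∈ Iio i,
      Metric.closedBall (u j) (r (u j))) ∪ ⋃ j, Metric.sphere (u j) (r (u j))) fun x hx => ?_).trans
      ((measure_union_le _ _).trans (by rw [hnull, add_zero]))
    by_cases hxE : x ∈ ⋃ j ∈ Iio i, Metric.closedBall (u j) (r (u j))
    · obtain ⟨j, hj, hxj⟩ := mem_iUnion₂.1 hxE
      refine Or.inr (mem_iUnion.2 ⟨j, le_antisymm hxj (not_lt.1 fun h => ?_)⟩)
      exact hx.2 (mem_biUnion hj h)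
    · exact Or.inl ⟨hx.1, hxE⟩

section Main

variable {m k : ℕ}

theorem volume_singleton_add (x : Euc m) (S : Set (Euc m)) : volume ({x} + S) = volume S := by
  rw [singleton_add, image_add_left, measure_preimage_add]

theorem volume_add_smul_singleton_add (K N : Set (Euc m)) (v : Euc m) (t : ℝ) :
    volume (K + t • ({v} + N)) = volume (K + t • N) := by
  rw [smul_add, smul_set_singleton, add_left_comm, volume_singleton_add]

theorem volume_real_smul {r : ℝ} (hr : 0 ≤ r) (S : Set (Euc m)) :
    volume.real (r • S) = r ^ m * volume.real S := by
  rw [Measure.real, Measure.addHaar_smul, ENNReal.toReal_mul, finrank_euclideanSpace_fin,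
    abs_of_nonneg (by positivity), ENNReal.toReal_ofReal (by positivity), Measure.real]

/-- The Brunn–Minkowski inequality. -/
theorem add_mul_pow_le_volume_real_add_smul {A B : Set (Euc m)} (hA : IsCompact A)
    (hB : IsCompact B) {a b t : ℝ} (ha : 0 < a) (hb : 0 < b) (ht : 0 < t)
    (hVA : volume.real A = a ^ m) (hVB : volume.real B = b ^ m) :
    (a + t * b) ^ m ≤ volume.real (A + t • B) := by
  have hs : 0 < a + t * b := by positivity
  have hA1 : volume.real (a⁻¹ • A) = 1 := by
    rw [volume_real_smul (by positivity), hVA, ← mul_pow, inv_mul_cancel₀ ha.ne', one_pow]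
  have hB1 : volume.real (b⁻¹ • B) = 1 := by
    rw [volume_real_smul (by positivity), hVB, ← mul_pow, inv_mul_cancel₀ hb.ne', one_pow]
  have hA' := hA.smul a⁻¹
  have hB' := hB.smul b⁻¹
  have heq : volume (a⁻¹ • A) = volume (b⁻¹ • B) := by
    rw [← ENNReal.toReal_eq_toReal_iff' hA'.measure_ne_top hB'.measure_ne_top]
    exact hA1.trans hB1.symm
  have hτ : 1 - t * b / (a + t * b) = a / (a + t * b) := by
    field_simp
    ring
  have h := volume_le_volume_combo hA' hB' heq (τ := t * b / (a + t * b)) (by positivity)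
    (by rw [div_lt_one hs]; linarith)
  have hset : (1 - t * b / (a + t * b)) • a⁻¹ • A + (t * b / (a + t * b)) • b⁻¹ • B =
      (a + t * b)⁻¹ • (A + t • B) := by
    rw [hτ, smul_add, smul_smul, smul_smul, smul_smul]
    congr 2 <;> field_simp
  rw [hset] at h
  have h' := ENNReal.toReal_mono ((hA.add (hB.smul t)).smul _).measure_ne_top h
  change volume.real _ ≤ volume.real _ at h'
  rw [hA1, volume_real_smul (by positivity), inv_pow, inv_mul_eq_div, le_div_iff₀ (by positivity),
    one_mul] at h'
  exact h'

theorem pow_succ_add_mul_le_add_pow {a c : ℝ} (ha : 0 ≤ a) (hc : 0 ≤ c) (k : ℕ) :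
    a ^ (k + 1) + (k + 1) * a ^ k * c ≤ (a + c) ^ (k + 1) := by
  induction k with
  | zero => simp
  | succ k ih =>
    have h := mul_le_mul_of_nonneg_right ih (add_nonneg ha hc)
    have h2 : 0 ≤ (k + 1) * a ^ k * c * c := by positivity
    push_cast
    calc _ ≤ (a ^ (k + 1) + (k + 1) * a ^ k * c) * (a + c) := by
          have : (a ^ (k + 1) + (k + 1) * a ^ k * c) * (a + c) =
            a ^ (k + 1 + 1) + (k + 1 + 1) * a ^ (k + 1) * c + (k + 1) * a ^ k * c * c := by ring
          linarith
      _ ≤ _ := h.trans_eq (pow_succ _ _).symm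

theorem IsConvexBody.volume_real_pos {K : Set (Euc m)} (hK : IsConvexBody K) :
    0 < volume.real K :=
  ENNReal.toReal_pos (Measure.measure_pos_of_nonempty_interior _ hK.2.2).ne' hK.2.1.measure_ne_top

/-- Minkowski's first inequality, with the mixed volume bounded through inner parallel bodies. -/
theorem mul_pow_le_of_eventually_le_innerParallel {M N : Set (Euc (k + 1))} (hM : IsConvexBody M)
    (hN : IsCompact N) {a b B : ℝ} (ha : 0 < a) (hb : 0 < b) (hVM : volume.real M = a ^ (k + 1))
    (hVN : volume.real N = b ^ (k + 1))
    (h : ∀ᶠ t in 𝓝[>] (0 : ℝ), volume.real M ≤ volume.real (innerParallel M N t) + t * B) :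
    (k + 1) * a ^ k * b ≤ B := by
  set e : ℝ := ((k + 1 : ℕ) : ℝ)⁻¹
  have hroot : ∀ {x : ℝ}, 0 ≤ x → (x ^ e) ^ (k + 1) = x := fun hx =>
    Real.rpow_inv_natCast_pow hx k.succ_ne_zero
  have he : 0 ≤ e := by positivity
  have htend : Filter.Tendsto (fun t : ℝ => (k + 1) * ((volume.real M - t * B) ^ e) ^ k * b)
      (𝓝[>] 0) (𝓝 ((k + 1) * a ^ k * b)) := by
    have hae : a = (volume.real M - 0 * B) ^ e := by
      rw [zero_mul, sub_zero, hVM, Real.pow_rpow_inv_natCast ha.le k.succ_ne_zero]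
    have hc : Continuous fun t : ℝ => (k + 1) * ((volume.real M - t * B) ^ e) ^ k * b := by
      have := Real.continuous_rpow_const he
      fun_prop
    conv => rhs; rhs; rw [hae]
    exact (hc.tendsto 0).mono_left nhdsWithin_le_nhds
  refine le_of_tendsto htend ?_
  have hpos : ∀ᶠ t in 𝓝[>] (0 : ℝ), 0 < volume.real M - t * B := by
    have hc : Continuous fun t : ℝ => volume.real M - t * B := by fun_prop
    exact ((continuousAt_const (x := (0 : ℝ))).eventually_lt hc.continuousAt
      (by simpa using hM.volume_real_pos)).filter_mono nhdsWithin_le_nhds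
  filter_upwards [h, hpos, self_mem_nhdsWithin] with t hle hpos ht
  have ht0 : 0 < t := ht
  set V := volume.real (innerParallel M N t)
  have hV : 0 < V := by linarith
  have h1 := add_mul_pow_le_volume_real_add_smul (isCompact_innerParallel hM.2.1 N t) hN
    (Real.rpow_pos_of_pos hV e) hb ht0 (hroot hV.le).symm hVN
  have h2 : volume.real (innerParallel M N t + t • N) ≤ volume.real M :=
    measureReal_mono (innerParallel_add_subset M N t) hM.2.1.measure_ne_top
  have h3 := pow_succ_add_mul_le_add_pow (Real.rpow_nonneg hV.le e) (mul_pos ht0 hb).le k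
  rw [hroot hV.le] at h3
  have h4 : t * ((k + 1) * (V ^ e) ^ k * b) ≤ t * B := by
    linear_combination h1 + h2 + h3 + hle
  refine le_trans ?_ (le_of_mul_le_mul_left h4 ht0)
  gcongr
  linarith

theorem IsConvexBody.add {K L : Set (Euc m)} (hK : IsConvexBody K) (hL : IsConvexBody L) :
    IsConvexBody (K + L) :=
  ⟨hK.1.add hL.1, hK.2.1.add hL.2.1,
    (hK.2.2.add (hL.2.2.mono interior_subset)).mono (subset_interior_add_left)⟩

/-- The first-order form of `volume_perturbation_le`. -/
theorem add_le_mul_of_eventually_le {K L : Set (Euc m)} (hm : 2 ≤ m) (hK : IsConvexBody K)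
    (hL : IsConvexBody L) {A B : ℝ}
    (hA : ∀ᶠ t in 𝓝[>] (0 : ℝ), volume.real K + t * A ≤ volume.real (K + t • (K + L)))
    (hB : ∀ᶠ t in 𝓝[>] (0 : ℝ), volume.real L + t * B ≤ volume.real (L + t • (K + L))) :
    A + B ≤ m * volume.real (K + L) := by
  set C : ℝ := 2 * (m + 4 ^ m) + 1 with hC
  have htend : Filter.Tendsto (fun t : ℝ => (m + C * t) * volume.real (K + L))
      (𝓝[>] 0) (𝓝 (m * volume.real (K + L))) := by
    have hc : Continuous fun t : ℝ => (m + C * t) * volume.real (K + L) := by fun_prop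
    simpa using (hc.tendsto 0).mono_left nhdsWithin_le_nhds
  refine ge_of_tendsto htend ?_
  filter_upwards [hA, hB, Ioo_mem_nhdsGT (zero_lt_one (α := ℝ))] with t hA hB ht
  have hC0 : 0 ≤ C := by positivity
  have hKc := hK.2.1
  have hLc := hL.2.1
  have hfin : ∀ {S : Set (Euc m)}, IsCompact S → volume S ≠ ∞ := fun h => h.measure_ne_top
  have hKL := hfin (hKc.add hLc)
  have hK' := hfin hKc
  have hL' := hfin hLc
  have h := ENNReal.toReal_mono (by finiteness) (volume_perturbation_le hm hK hL ht.1 ht.2.le)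
  rw [ENNReal.toReal_add (hfin (hKc.add ((hKc.add hLc).smul t)))
      (hfin (hLc.add ((hKc.add hLc).smul t))), ENNReal.toReal_add (by finiteness) (by finiteness),
    ENNReal.toReal_add hK' hL', ENNReal.toReal_mul,
    ENNReal.toReal_ofReal (by have := ht.1; positivity)] at h
  change volume.real _ + volume.real _ ≤ volume.real _ + volume.real _ + _ * volume.real _ at h
  rw [← hC] at h
  refine le_of_mul_le_mul_left ?_ ht.1
  linear_combination h + hA + hB

theorem volume_root_le_of_fine_partition {K L M N : Set (Euc (k + 1))} (hk : 1 ≤ k)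
    (hK : IsConvexBody K) (hL : IsConvexBody L) (hM : IsConvexBody M)
    (hS : ∀ U : Set (Euc (k + 1)), MeasurableSet U →
      surfMeasure M U = surfMeasure K U + surfMeasure L U)
    {v : Euc (k + 1)} (hN : N = {v} + (K + L)) {ρ R : ℝ} (hρ : 0 < ρ)
    (hρN : Metric.closedBall 0 ρ ⊆ N) (hNR : N ⊆ Metric.closedBall 0 R) {a b : ℝ} (ha : 0 < a)
    (hb : 0 < b) (hVM : volume.real M = a ^ (k + 1)) (hVN : volume.real (K + L) = b ^ (k + 1))
    {δ : ℝ} (hδ : 0 < δ) (hη : (1 + R / ρ) * δ < 1) :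
    (1 - (1 + R / ρ) * δ) ^ k * (1 - δ) * ((k + 1) * a ^ k * b) ≤
      (1 + δ * R / ρ) * ((k + 1) * b ^ (k + 1)) := by
  have := isFiniteMeasure_surfMeasure hK
  have := isFiniteMeasure_surfMeasure hL
  have := isFiniteMeasure_surfMeasure hM
  set η := (1 + R / ρ) * δ with hηdef
  have hKL := hK.add hL
  have hNc : IsCompact N := hN ▸ isCompact_singleton.add hKL.2.1
  have hNconv : Convex ℝ N := hN ▸ (convex_singleton v).add hKL.1
  have h0N : (0 : Euc (k + 1)) ∈ N := hρN (Metric.mem_closedBall_self hρ.le)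
  have hR : ∀ w ∈ N, ‖w‖ ≤ R := fun w hw => mem_closedBall_zero_iff.1 (hNR hw)
  have hR0 : 0 ≤ R := (norm_nonneg _).trans (hR 0 h0N)
  have hδ1 : δ < 1 := lt_of_le_of_lt (le_mul_of_one_le_left hδ.le
    (le_add_of_nonneg_right (by positivity))) hη
  obtain ⟨n, u, E, D, hu, hE, hEd, hD, hED, hDδ, hcov, hDE⟩ :=
    exists_fine_sphere_partition (surfMeasure M) hδ
  choose w hwN hwmax using fun i => hNc.exists_isMaxOn ⟨0, h0N⟩
    (f := fun w => ⟪w, u i⟫) (by fun_prop)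
  have hwmax' : ∀ i, ∀ x ∈ N, ⟪x, u i⟫ ≤ ⟪w i, u i⟫ := fun i x hx => hwmax i hx
  have hwρ : ∀ i, ρ ≤ ⟪w i, u i⟫ := fun i => by
    have := hwmax' i (ρ • u i) (hρN (by simp [norm_smul, hu, abs_of_pos hρ]))
    rwa [inner_smul_left, real_inner_self_eq_norm_sq, hu, one_pow, conj_trivial, mul_one] at this
  set S : Set (Euc (k + 1)) → ℝ := fun Q => ∑ i, ⟪w i, u i⟫ * (surfMeasure Q).real (E i) with hSdef
  have hSadd : S M = S K + S L := by
    rw [hSdef]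
    simp only
    rw [← Finset.sum_add_distrib]
    refine Finset.sum_congr rfl fun i _ => ?_
    rw [Measure.real, hS _ (hE i), ENNReal.toReal_add (measure_ne_top _ _) (measure_ne_top _ _)]
    exact mul_add _ _ _
  have hlower : hausdorffFactor k * (1 - η) ^ k * S M ≤ (k + 1) * b ^ (k + 1) := by
    refine le_of_forall_pos_le_add fun ε hε => ?_
    have key : ∀ Q : Set (Euc (k + 1)), IsConvexBody Q → ∀ᶠ t in 𝓝[>] (0 : ℝ), volume.real Q +
        t * (hausdorffFactor k * (1 - η) ^ k * S Q - ε / 2) ≤ volume.real (Q + t • (K + L)) := by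
      intro Q hQ
      have := eventually_volume_add_smul_ge hQ hNc hNconv h0N hδ.le hu hρ hwN hwρ
        (fun i => hR _ (hwN i)) hηdef.ge hη hE hEd (fun i => (hED i).trans (hDδ i))
        (sub_lt_self (hausdorffFactor k * (1 - η) ^ k * S Q) (half_pos hε))
      simpa only [Measure.real, hN, volume_add_smul_singleton_add] using this
    have := add_le_mul_of_eventually_le (by lia) hK hL (key K hK) (key L hL)
    rw [hVN] at this
    push_cast at this
    rw [hSadd]
    linarith
  have hVN' : volume.real N = b ^ (k + 1) := by
    rw [hN, Measure.real, volume_singleton_add]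
    exact hVN
  have hupper : (1 - δ) * ((k + 1) * a ^ k * b) ≤
      (1 + δ * R / ρ) * (hausdorffFactor k * S M) := by
    rw [← le_div_iff₀' (by linarith)]
    refine le_of_forall_gt_imp_ge_of_dense fun B hB => ?_
    refine mul_pow_le_of_eventually_le_innerParallel hM hNc ha hb hVM hVN'
      (eventually_volume_le_innerParallel hM hNc hδ1 hu hD hDδ hcov hwmax' hR
        (fun i => add_nonneg (hρ.le.trans (hwρ i)) (by positivity)) (lt_of_le_of_lt ?_ hB))
    have hDE' : ∀ i, (surfMeasure M).real (D i) = (surfMeasure M).real (E i) := fun i => by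
      rw [Measure.real, hDE, Measure.real]
    simp only [hSdef]
    rw [mul_left_comm, mul_div_assoc, mul_div_right_comm, Finset.mul_sum _ _ ((1 + _) / _)]
    refine mul_le_mul_of_nonneg_left (Finset.sum_le_sum fun i _ => ?_) (NNReal.coe_nonneg _)
    rw [hDE', ← mul_assoc]
    gcongr
    have h1δ : 0 < 1 - δ := by linarith
    rw [div_mul_eq_mul_div]
    gcongr
    have : δ * R / ρ * ρ ≤ δ * R / ρ * ⟪w i, u i⟫ := by
      gcongr
      exact hwρ i
    rw [div_mul_cancel₀ _ hρ.ne'] at this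
    linarith
  have h1η : 0 ≤ (1 - η) ^ k := pow_nonneg (by linarith) k
  calc _ = (1 - η) ^ k * ((1 - δ) * ((k + 1) * a ^ k * b)) := by ring
    _ ≤ (1 - η) ^ k * ((1 + δ * R / ρ) * (hausdorffFactor k * S M)) := by gcongr
    _ = (1 + δ * R / ρ) * (hausdorffFactor k * (1 - η) ^ k * S M) := by ring
    _ ≤ _ := by gcongr

theorem IsConvexBody.exists_closedBall_subset {N : Set (Euc m)} (hN : IsConvexBody N) :
    ∃ v : Euc m, ∃ ρ > 0, ∃ R, Metric.closedBall 0 ρ ⊆ {v} + N ∧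
      {v} + N ⊆ Metric.closedBall 0 R := by
  obtain ⟨x, hx⟩ := hN.2.2
  obtain ⟨ρ, hρ, hsub⟩ := Metric.nhds_basis_closedBall.mem_iff.1 (mem_interior_iff_mem_nhds.1 hx)
  obtain ⟨R, hR⟩ := (isCompact_singleton (x := -x) |>.add hN.2.1).isBounded.subset_closedBall 0
  refine ⟨-x, ρ, hρ, R, fun y hy => ?_, hR⟩
  refine ⟨-x, rfl, x + y, hsub ?_, neg_add_cancel_left x y⟩
  simpa [dist_eq_norm] using hy

end Main

/-- the volume of the Blaschke sum never exceeds the volume of the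
Minkowski sum. -/
theorem vol_blaschke_le_vol_minkowski {m : ℕ} (hm : 2 ≤ m)
    (K L M : Set (Euc m)) (hK : IsConvexBody K) (hL : IsConvexBody L)
    (hM : IsConvexBody M)
    (hS : ∀ U : Set (Euc m), MeasurableSet U →
      surfMeasure M U = surfMeasure K U + surfMeasure L U) :
    volume M ≤ volume (K + L) := by
  obtain ⟨k, rfl⟩ : ∃ k, m = k + 1 := ⟨m - 1, by lia⟩
  have hk : 1 ≤ k := by lia
  have hKL := hK.add hL
  obtain ⟨v, ρ, hρ, R, hρN, hNR⟩ := hKL.exists_closedBall_subset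
  have hroot : ∀ {x : ℝ}, 0 < x → ∃ a, 0 < a ∧ x = a ^ (k + 1) := fun {x} hx =>
    ⟨x ^ ((k + 1 : ℕ) : ℝ)⁻¹, Real.rpow_pos_of_pos hx _,
      (Real.rpow_inv_natCast_pow hx.le k.succ_ne_zero).symm⟩
  obtain ⟨a, ha, hVM⟩ := hroot hM.volume_real_pos
  obtain ⟨b, hb, hVN⟩ := hroot hKL.volume_real_pos
  have hlim : (k + 1) * a ^ k * b ≤ (k + 1) * b ^ (k + 1) := by
    have hl : Continuous fun δ : ℝ =>
      (1 - (1 + R / ρ) * δ) ^ k * (1 - δ) * ((k + 1) * a ^ k * b) := by fun_prop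
    have hr : Continuous fun δ : ℝ => (1 + δ * R / ρ) * ((k + 1) * b ^ (k + 1)) := by fun_prop
    have hη : Continuous fun δ : ℝ => (1 + R / ρ) * δ := by fun_prop
    have hη1 : ∀ᶠ δ in 𝓝[>] (0 : ℝ), (1 + R / ρ) * δ < 1 :=
      (hη.continuousAt.eventually_lt continuousAt_const (by simp)).filter_mono nhdsWithin_le_nhds
    have := le_of_tendsto_of_tendsto ((hl.tendsto 0).mono_left nhdsWithin_le_nhds)
      ((hr.tendsto 0).mono_left nhdsWithin_le_nhds) (b := 𝓝[>] (0 : ℝ)) (by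
        filter_upwards [hη1, self_mem_nhdsWithin] with δ hη hδ
        exact volume_root_le_of_fine_partition hk hK hL hM hS rfl hρ hρN hNR ha hb hVM hVN hδ hη)
    simpa using this
  have hab : a ≤ b := by
    have h1 : (k + 1) * b * a ^ k ≤ (k + 1) * b * b ^ k := by
      calc _ = (k + 1) * a ^ k * b := by ring
        _ ≤ _ := hlim
        _ = _ := by ring
    exact (pow_le_pow_iff_left₀ ha.le hb.le (by lia)).1 (le_of_mul_le_mul_left h1 (by positivity))
  rw [← ENNReal.toReal_le_toReal hM.2.1.measure_ne_top hKL.2.1.measure_ne_top]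
  change volume.real M ≤ volume.real (K + L)
  rw [hVM, hVN]
  gcongr
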